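/- If A is not K-trivial and X ≥_T A″, then there exists a Martin-Löf random sequence R with R ≱_T ∅′ such that A ⊕ R ≡_T X and A and R form a minimal pair (every set computable from both A and R is computable). -/

import Mathlib

open MeasureTheory ENNReal

/-! ### Cantor space and the uniform (coin-flipping) measure -/

/-- The binary digits of a real number in `[0,1)`, giving a point of Cantor space. -/
noncomputable def binaryDigits (x : ℝ) : ℕ → Bool :=
  fun n => decide (⌊x * 2 ^ (n + 1)⌋ % 2 = 1)

/-- The uniform (Lebesgue / coin-flipping) measure on Cantor space `2^ω`,
obtained as the pushforward of Lebesgue measure on `[0,1)` under binary expansion. -/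
noncomputable def μCantor : Measure (ℕ → Bool) :=
  Measure.map binaryDigits (volume.restrict (Set.Ico (0 : ℝ) 1))

/-- `σ` is an initial segment of the infinite sequence `X`. -/
def IsPrefixOf (σ : List Bool) (X : ℕ → Bool) : Prop :=
  ∀ i : Fin σ.length, X i = σ.get i

/-- The cylinder determined by a finite binary string. -/
def cylinder (σ : List Bool) : Set (ℕ → Bool) := {X | IsPrefixOf σ X}

/-- The open set generated by a set of finite binary strings. -/
def openOf (S : Set (List Bool)) : Set (ℕ → Bool) := ⋃ σ ∈ S, cylinder σ

/-- The density of a set `P` above the string `τ`: `μ([τ] ∩ P) · 2^{|τ|}`. -/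
noncomputable def dens (τ : List Bool) (P : Set (ℕ → Bool)) : ℝ≥0∞ :=
  μCantor (cylinder τ ∩ P) * 2 ^ τ.length

/-- The length-`n` initial segment of `X`, as a finite binary string. -/
def strPrefix (X : ℕ → Bool) (n : ℕ) : List Bool := (List.range n).map X

/-- A set of strings is prefix-free if no element is a proper prefix of another. -/
def PrefixFreeSet (S : Set (List Bool)) : Prop :=
  ∀ σ ∈ S, ∀ τ ∈ S, σ <+: τ → σ = τ

/-- The weight `∑_{σ ∈ S} 2^{-|σ|}` of a set of strings. -/
noncomputable def weight (S : Set (List Bool)) : ℝ≥0∞ :=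
  ∑' σ : S, 2⁻¹ ^ (σ : List Bool).length

/-- A set of strings is bounded if its weight is finite. -/
def BoundedStr (S : Set (List Bool)) : Prop := weight S < ⊤

/-- The tail `X(·+k)` of an infinite binary sequence. -/
def tailSeq (X : ℕ → Bool) (k : ℕ) : ℕ → Bool := fun n => X (n + k)

/-! ### Oracle computability -/

/-- The `e`-th computably enumerable set of naturals (the domain of the `e`-th
partial computable function). -/
def WEnum (e n : ℕ) : Prop := ((Denumerable.ofNat Nat.Partrec.Code e).eval n).Dom

/-- `OracleComputes e X n m` holds if the `e`-th Turing functional with oracle `X`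
outputs `m` on input `n`; a Turing functional is presented by the c.e. set `W_e`
of coded axioms `(σ, n, m)`, and `Γ_e^X(n) = m` iff some initial segment `σ` of `X`
has `(σ, n, m) ∈ W_e`. -/
def OracleComputes (e : ℕ) (X : ℕ → Bool) (n m : ℕ) : Prop :=
  ∃ σ : List Bool, IsPrefixOf σ X ∧
    WEnum e (Nat.pair (Encodable.encode σ) (Nat.pair n m))

def natOfBool (b : Bool) : ℕ := cond b 1 0

/-- `f : ℕ → ℕ` is computable with oracle `A`: some Turing functional with oracle `A`
has graph exactly `f`. -/
def FnComputableIn (f : ℕ → ℕ) (A : ℕ → Bool) : Prop :=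
  ∃ e, ∀ n m, OracleComputes e A n m ↔ m = f n

/-- Turing reducibility `B ≤_T A` for subsets of `ω` (as elements of Cantor space). -/
def TuringLE (B A : ℕ → Bool) : Prop := FnComputableIn (fun n => natOfBool (B n)) A

/-- Turing equivalence. -/
def TuringEquiv (A B : ℕ → Bool) : Prop := TuringLE A B ∧ TuringLE B A

/-- The Turing join `A ⊕ B`. -/
def joinSet (A B : ℕ → Bool) : ℕ → Bool :=
  fun n => if n % 2 = 0 then A (n / 2) else B (n / 2)

open Classical in
/-- The Turing jump `A′ = {e : Γ_e^A(e)↓}`. -/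
noncomputable def jump (A : ℕ → Bool) : ℕ → Bool :=
  fun e => decide (∃ m, OracleComputes e A e m)

/-- The empty oracle. -/
def emptyOracle : ℕ → Bool := fun _ => false

/-- The halting problem `∅′`. -/
noncomputable def zeroJump : ℕ → Bool := jump emptyOracle

/-- A set is computable iff it is Turing reducible to the empty oracle. -/
def ComputableSet (A : ℕ → Bool) : Prop := TuringLE A emptyOracle

/-- A set of naturals is c.e. in `A`. -/
def CeIn (A : ℕ → Bool) (S : Set ℕ) : Prop :=
  ∃ e, ∀ n, n ∈ S ↔ ∃ m, OracleComputes e A n m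

/-- A set of strings is c.e. in `A`. -/
def CeStrIn (A : ℕ → Bool) (S : Set (List Bool)) : Prop :=
  ∃ e, ∀ σ : List Bool, σ ∈ S ↔ ∃ m, OracleComputes e A (Encodable.encode σ) m

/-- A c.e. set of strings. -/
def CeStr (S : Set (List Bool)) : Prop := CeStrIn emptyOracle S

/-! ### Π⁰₁ classes, Martin-Löf randomness, K-triviality -/

/-- A `Π⁰₁(A)` class: the complement of the union of cylinders over an `A`-c.e.
set of strings. -/
def Pi01In (A : ℕ → Bool) (P : Set (ℕ → Bool)) : Prop :=
  ∃ S : Set (List Bool), CeStrIn A S ∧ P = (openOf S)ᶜ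

/-- A `Π⁰₁` class. -/
def Pi01 (P : Set (ℕ → Bool)) : Prop := Pi01In emptyOracle P

/-- The `n`-th level of the `e`-th `A`-effective sequence of open sets. -/
def testLevel (e : ℕ) (A : ℕ → Bool) (n : ℕ) : Set (ℕ → Bool) :=
  openOf {σ | ∃ m, OracleComputes e A (Nat.pair n (Encodable.encode σ)) m}

/-- A Martin-Löf test relative to `A`: a uniformly `A`-c.e. sequence of open sets
`G n` with `μ(G n) ≤ 2^{-n}`. -/
def MLTestIn (A : ℕ → Bool) (G : ℕ → Set (ℕ → Bool)) : Prop :=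
  (∃ e, ∀ n, G n = testLevel e A n) ∧ ∀ n, μCantor (G n) ≤ 2⁻¹ ^ n

/-- `X` is Martin-Löf random relative to `A`: it passes every `A`-Martin-Löf test. -/
def MLRandomIn (A X : ℕ → Bool) : Prop :=
  ∀ G : ℕ → Set (ℕ → Bool), MLTestIn A G → ∃ n, X ∉ G n

/-- `X` is Martin-Löf random. -/
def MLRandom (X : ℕ → Bool) : Prop := MLRandomIn emptyOracle X

/-- The domain of the `e`-th machine, viewed as a set of binary strings. -/
def machineDom (e : ℕ) : Set (List Bool) :=
  {σ | ((Denumerable.ofNat Nat.Partrec.Code e).eval (Encodable.encode σ)).Dom}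

/-- The `e`-th machine is prefix-free. -/
def PrefixFreeMachine (e : ℕ) : Prop := PrefixFreeSet (machineDom e)

/-- Prefix-free Kolmogorov complexity (defined, up to an additive constant, as the
least `|σ| + 2e + 2` over prefix-free machines `e` and programs `σ` producing `x`). -/
noncomputable def Kcpx (x : ℕ) : ℕ :=
  sInf {k | ∃ e, ∃ σ : List Bool, PrefixFreeMachine e ∧
    x ∈ (Denumerable.ofNat Nat.Partrec.Code e).eval (Encodable.encode σ) ∧
    k = σ.length + 2 * e + 2}

/-- `K(n)` means `K(1^n)`. -/
noncomputable def KofNat (n : ℕ) : ℕ := Kcpx (Encodable.encode (List.replicate n true))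

/-- `A` is K-trivial: `K(A↾n) ≤ K(n) + c` for some constant `c`. -/
def KTrivial (A : ℕ → Bool) : Prop :=
  ∃ c, ∀ n, Kcpx (Encodable.encode (strPrefix A n)) ≤ KofNat n + c

/-!
Pair each program describing a length `n` with the initial segment `A↾n`, and give the pair the
weight of the program. The set `B` of these pairs is computable in `A` and has finite weight, but a
c.e. superset of finite weight would turn, by Kraft–Chaitin, into a machine witnessing that `A` is
K-trivial. This persists for either of two colour classes if `B` is taken to consist of two copies.

To a number `n` of weight `2⁻ᵏ` belongs the event that `k` fixed bits are all `true`, the block of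
`n`. The sequence `R` is built by forcing with `Π⁰₁` classes minus the blocks of undecided elements
of `B`, kept of positive measure. A bit of `X` is coded by the colour of the next element of `B`
whose block `R` enters. A suitable element exists: the numbers whose block meets the current `Π⁰₁`
class in a too small set form a c.e. set, which by a second moment estimate has finite weight, and
so does not cover the elements of `B` of the given colour.

Positivity of the measure is c.e. in `A′`, so the construction is computable in `X`, while `A ⊕ R`
finds the blocks entered and reads off the colours. Finally, let a functional be compared with a
set `Z` computable in `A′`. Either it can be forced to be partial or to differ from `Z`, or it
computes `Z` from almost every member of a class of positive measure; then `Z` is computable by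
Sacks' majority vote. The case `Z = ∅′` shows that `R` does not compute `∅′`.
-/

attribute [fun_prop] Computable Computable.id Computable.const Computable.comp Computable.pair
  Computable.fst Computable.snd Computable.encode Computable.decode Computable.unpair
  Computable.list_length Computable.option_some Computable.ofNat

namespace DayMiller

open Nat.Partrec (Code)

/-! ### Computable functions -/

section Computable

variable {α β : Type*} [Primcodable α] [Primcodable β]

@[fun_prop] theorem computable_natPair {f g : α → ℕ} (hf : Computable f) (hg : Computable g) :
    Computable fun a => Nat.pair (f a) (g a) := Primrec₂.natPair.to_comp.comp hf hg

@[fun_prop] theorem computable_getElem? {f : α → List β} {g : α → ℕ} (hf : Computable f)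
    (hg : Computable g) : Computable fun a => (f a)[g a]? := Computable.list_getElem?.comp hf hg

@[fun_prop] theorem computable_take {f : α → ℕ} {g : α → List β} (hf : Computable f)
    (hg : Computable g) : Computable fun a => (g a).take (f a) :=
  Primrec.list_take.to_comp.comp hf hg

@[fun_prop] theorem computable_cons {f : α → β} {g : α → List β} (hf : Computable f)
    (hg : Computable g) : Computable fun a => f a :: g a := Computable.list_cons.comp hf hg

@[fun_prop] theorem computable_isSome {f : α → Option β} (hf : Computable f) :
    Computable fun a => (f a).isSome := Primrec.option_isSome.to_comp.comp hf

@[fun_prop] theorem computable_getD {f : α → Option β} {g : α → β} (hf : Computable f)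
    (hg : Computable g) : Computable fun a => (f a).getD (g a) := Computable.option_getD hf hg

@[fun_prop] theorem computable_and {f g : α → Bool} (hf : Computable f) (hg : Computable g) :
    Computable fun a => f a && g a := (Primrec.dom_bool₂ _).to_comp.comp hf hg

@[fun_prop] theorem computable_or {f g : α → Bool} (hf : Computable f) (hg : Computable g) :
    Computable fun a => f a || g a := (Primrec.dom_bool₂ _).to_comp.comp hf hg

@[fun_prop] theorem computable_not {f : α → Bool} (hf : Computable f) :
    Computable fun a => !(f a) := (Primrec.dom_bool _).to_comp.comp hf

@[fun_prop] theorem computable_add {f g : α → ℕ} (hf : Computable f) (hg : Computable g) :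
    Computable fun a => f a + g a := Primrec.nat_add.to_comp.comp hf hg

@[fun_prop] theorem computable_sub {f g : α → ℕ} (hf : Computable f) (hg : Computable g) :
    Computable fun a => f a - g a := Primrec.nat_sub.to_comp.comp hf hg

@[fun_prop] theorem computable_mul {f g : α → ℕ} (hf : Computable f) (hg : Computable g) :
    Computable fun a => f a * g a := Primrec.nat_mul.to_comp.comp hf hg

@[fun_prop] theorem computable_div {f g : α → ℕ} (hf : Computable f) (hg : Computable g) :
    Computable fun a => f a / g a := Primrec.nat_div.to_comp.comp hf hg

@[fun_prop] theorem computable_mod {f g : α → ℕ} (hf : Computable f) (hg : Computable g) :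
    Computable fun a => f a % g a := Primrec.nat_mod.to_comp.comp hf hg

@[fun_prop] theorem computable_pow {f g : α → ℕ} (hf : Computable f) (hg : Computable g) :
    Computable fun a => f a ^ g a := (Primrec₂.unpaired'.1 Nat.Primrec.pow).to_comp.comp hf hg

@[fun_prop] theorem computable_decide_le {f g : α → ℕ} (hf : Computable f) (hg : Computable g) :
    Computable fun a => decide (f a ≤ g a) := (Primrec.nat_le.decide.to_comp.comp hf hg :)

@[fun_prop] theorem computable_decide_lt {f g : α → ℕ} (hf : Computable f) (hg : Computable g) :
    Computable fun a => decide (f a < g a) := (Primrec.nat_lt.decide.to_comp.comp hf hg :)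

@[fun_prop] theorem computable_decide_eq [DecidableEq β] {f g : α → β} (hf : Computable f)
    (hg : Computable g) : Computable fun a => decide (f a = g a) :=
  (Primrec.eq.decide.to_comp.comp hf hg :)

@[fun_prop] theorem computable_cond {c : α → Bool} {f g : α → β} (hc : Computable c)
    (hf : Computable f) (hg : Computable g) : Computable fun a => bif c a then f a else g a :=
  Computable.cond hc hf hg

@[fun_prop] theorem computable_evaln {k : α → ℕ} {c : α → Code} {n : α → ℕ}
    (hk : Computable k) (hc : Computable c) (hn : Computable n) :
    Computable fun a => Code.evaln (k a) (c a) (n a) :=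
  Code.primrec_evaln.to_comp.comp ((hk.pair hc).pair hn)

@[fun_prop] theorem computable_isPrefixOf {f g : α → List Bool} (hf : Computable f)
    (hg : Computable g) : Computable fun a => (f a).isPrefixOf (g a) := by
  have h (a : α) : (f a).isPrefixOf (g a) = decide (f a = (g a).take (f a).length) := by
    rw [Bool.eq_iff_iff, List.isPrefixOf_iff_prefix, List.prefix_iff_eq_take, decide_eq_true_iff]
  simp only [h]
  fun_prop

theorem computable_all_range {f : α → ℕ} {g : α → ℕ → Bool} (hf : Computable f)
    (hg : Computable fun q : α × ℕ => g q.1 q.2) :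
    Computable fun a => (List.range (f a)).all (g a) := by
  have hrec : Computable fun a => Nat.rec (motive := fun _ => Bool) true
      (fun i b => b && g a i) (f a) :=
    Computable.nat_rec (h := fun a q => q.2 && g a q.1) hf (.const true)
      (show Computable fun q : α × ℕ × Bool => q.2.2 && g q.1 q.2.1 by fun_prop)
  refine hrec.of_eq fun a => ?_
  induction f a with
  | zero => rfl
  | succ n ih => simp [List.range_succ, ih]

theorem computable_any_range {f : α → ℕ} {g : α → ℕ → Bool} (hf : Computable f)
    (hg : Computable fun q : α × ℕ => g q.1 q.2) :
    Computable fun a => (List.range (f a)).any (g a) := by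
  simp only [List.any_eq_not_all_not]
  exact computable_not (computable_all_range hf (by fun_prop))

theorem exists_code_dom_iff {p : α → Prop} (hp : REPred p) :
    ∃ c : Code, ∀ a, (c.eval (Encodable.encode a)).Dom ↔ p a := by
  obtain ⟨c, hc⟩ := Code.exists_code.1 hp
  exact ⟨c, fun a => by simp [hc, Part.assert]⟩

theorem eval_dom_iff (c : Code) (n : ℕ) :
    (c.eval n).Dom ↔ ∃ k, (c.evaln k n).isSome = true := by
  simp only [Part.dom_iff_mem, Code.evaln_complete, Option.isSome_iff_exists,
    Option.mem_def]
  exact exists_comm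

theorem rePred_of_stages {p : α → Prop} {d : α × ℕ → Bool} (hd : Computable d)
    (h : ∀ a, p a ↔ ∃ t, d (a, t) = true) : REPred p := by
  have hfind : Partrec fun a => Nat.rfind fun n => (Part.some (d (a, n)) : Part Bool) :=
    Partrec.rfind (p := fun a n => Part.some (d (a, n))) hd.partrec.to₂
  refine hfind.dom_re.of_eq fun a => (Nat.rfind_dom.trans ?_).trans (h a).symm
  simp only [Part.mem_some_iff, Part.some_dom, implies_true, and_true, eq_comm]

theorem rePred_wEnum : REPred fun q : ℕ × ℕ => WEnum q.1 q.2 :=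
  rePred_of_stages (d := fun q => (Code.evaln q.2
    (Denumerable.ofNat Code q.1.1) q.1.2).isSome) (by fun_prop)
    fun _ => eval_dom_iff _ _

theorem exists_wEnum_iff {p : α → β → Prop} (hp : REPred fun q : α × β => p q.1 q.2) :
    ∃ f : α → ℕ, Computable f ∧ ∀ a b, WEnum (f a) (Encodable.encode b) ↔ p a b := by
  obtain ⟨c, hc⟩ := exists_code_dom_iff hp
  refine ⟨fun a => Encodable.encode (c.curry (Encodable.encode a)), ?_, fun a b => ?_⟩
  · exact Computable.encode.comp
      (Code.primrec₂_curry.to_comp.comp (Computable.const c) Computable.encode)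
  · rw [WEnum, Denumerable.ofNat_encode, Code.eval_curry]
    exact hc (a, b)

end Computable

section Prefixes

variable (X : ℕ → Bool)

@[simp] theorem length_strPrefix (n : ℕ) : (strPrefix X n).length = n := by
  simp [strPrefix]

theorem getElem?_strPrefix (n i : ℕ) :
    (strPrefix X n)[i]? = if i < n then some (X i) else none := by
  split_ifs with h <;> simp [strPrefix, h]

theorem take_strPrefix (m n : ℕ) : (strPrefix X n).take m = strPrefix X (min m n) := by
  refine List.ext_getElem? fun i => ?_
  simp only [List.getElem?_take, getElem?_strPrefix, lt_min_iff, ite_and]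

variable {X} {σ : List Bool}

theorem strPrefix_prefix_strPrefix {m n : ℕ} (hmn : m ≤ n) : strPrefix X m <+: strPrefix X n := by
  rw [List.prefix_iff_eq_take, length_strPrefix, take_strPrefix, min_eq_left hmn]

theorem isPrefixOf_iff_getElem? : IsPrefixOf σ X ↔ ∀ i < σ.length, σ[i]? = some (X i) := by
  refine Fin.forall_iff.trans (forall₂_congr fun i hi => ?_)
  rw [List.getElem?_eq_getElem hi, Option.some_inj, eq_comm, List.get_eq_getElem]

theorem isPrefixOf_iff_strPrefix_eq : IsPrefixOf σ X ↔ strPrefix X σ.length = σ := by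
  refine isPrefixOf_iff_getElem?.trans ⟨fun h => List.ext_getElem? fun i => ?_, fun h i hi => ?_⟩
  · by_cases hi : i < σ.length
    · rw [getElem?_strPrefix, if_pos hi, h i hi]
    · rw [getElem?_strPrefix, if_neg hi, List.getElem?_eq_none (not_lt.1 hi)]
  · rw [← h, getElem?_strPrefix, if_pos hi]

theorem isPrefixOf_strPrefix (n : ℕ) : IsPrefixOf (strPrefix X n) X := by
  rw [isPrefixOf_iff_strPrefix_eq, length_strPrefix]

theorem exists_isPrefixOf {q : List Bool → Prop} :
    (∃ σ, IsPrefixOf σ X ∧ q σ) ↔ ∃ n, q (strPrefix X n) := by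
  constructor
  · rintro ⟨σ, hσ, hq⟩
    exact ⟨σ.length, by rwa [isPrefixOf_iff_strPrefix_eq.1 hσ]⟩
  · rintro ⟨n, hq⟩
    exact ⟨_, isPrefixOf_strPrefix n, hq⟩

end Prefixes

/-! ### Relative `Σ⁰₁` predicates -/

/-- The predicate `p` is `Σ⁰₁` relative to the oracle `X`: some computable test accepts `a` together
with an initial segment of `X` exactly when `p a` holds. The oracle comes last so that `fun_prop`
can prove such statements compositionally. -/
@[fun_prop] def SigmaOneIn {α : Type*} [Primcodable α] (p : α → Prop) (X : ℕ → Bool) : Prop :=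
  ∃ d : List Bool × α → Bool, Computable d ∧ ∀ a, p a ↔ ∃ t, d (strPrefix X t, a) = true

namespace SigmaOneIn

variable {α β : Type*} [Primcodable α] [Primcodable β] {X : ℕ → Bool}

theorem of_iff {p q : α → Prop} (hp : SigmaOneIn p X) (h : ∀ a, q a ↔ p a) : SigmaOneIn q X :=
  (funext fun a => propext (h a) : q = p) ▸ hp

@[fun_prop] theorem comp {p : β → Prop} {f : α → β} (hp : SigmaOneIn p X) (hf : Computable f) :
    SigmaOneIn (fun a => p (f a)) X := by
  obtain ⟨d, hd, h⟩ := hp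
  exact ⟨fun q => d (q.1, f q.2), by fun_prop, fun a => h (f a)⟩

theorem of_computable {f : α → Bool} (hf : Computable f) : SigmaOneIn (fun a => f a = true) X :=
  ⟨fun q => f q.2, by fun_prop, fun a => by simp only [exists_const]⟩

@[fun_prop] theorem eq {f g : α → β} (hf : Computable f) (hg : Computable g) :
    SigmaOneIn (fun a => f a = g a) X :=
  (of_computable (f := fun a => decide (Encodable.encode (f a) = Encodable.encode (g a)))
    (by fun_prop)).of_iff fun a => by rw [decide_eq_true_iff, Encodable.encode_inj]

@[fun_prop] theorem ne {f g : α → β} (hf : Computable f) (hg : Computable g) :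
    SigmaOneIn (fun a => f a ≠ g a) X :=
  (of_computable (f := fun a => !decide (Encodable.encode (f a) = Encodable.encode (g a)))
    (by fun_prop)).of_iff fun a => by simp

@[fun_prop] theorem le {f g : α → ℕ} (hf : Computable f) (hg : Computable g) :
    SigmaOneIn (fun a => f a ≤ g a) X :=
  (of_computable (computable_decide_le hf hg)).of_iff fun _ => decide_eq_true_iff.symm

@[fun_prop] theorem lt {f g : α → ℕ} (hf : Computable f) (hg : Computable g) :
    SigmaOneIn (fun a => f a < g a) X :=
  (of_computable (computable_decide_lt hf hg)).of_iff fun _ => decide_eq_true_iff.symm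

theorem exists_monotone {p : α → Prop} (hp : SigmaOneIn p X) :
    ∃ d : List Bool × α → Bool, Computable d ∧
      (∀ a, Monotone fun t => d (strPrefix X t, a)) ∧
      ∀ a, p a ↔ ∃ t, d (strPrefix X t, a) = true := by
  obtain ⟨d, hd, h⟩ := hp
  have hiff : ∀ t a, ((List.range ((strPrefix X t).length + 1)).any fun i =>
      d ((strPrefix X t).take i, a)) = true ↔ ∃ i ≤ t, d (strPrefix X i, a) = true := by
    intro t a
    simp only [List.any_eq_true, List.mem_range, length_strPrefix, take_strPrefix,
      Nat.lt_succ_iff]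
    exact exists_congr fun i => and_congr_right fun hi => by rw [min_eq_left hi]
  refine ⟨fun q => (List.range (q.1.length + 1)).any fun i => d (q.1.take i, q.2),
    computable_any_range (by fun_prop) (by fun_prop), fun a s t hst => ?_, fun a => ?_⟩
  · rw [Bool.le_iff_imp, hiff, hiff]
    exact fun ⟨i, hi, hd⟩ => ⟨i, hi.trans hst, hd⟩
  · simp only [h, hiff]
    exact ⟨fun ⟨t, ht⟩ => ⟨t, t, le_rfl, ht⟩, fun ⟨_, i, _, hi⟩ => ⟨i, hi⟩⟩

@[fun_prop] theorem and {p q : α → Prop} (hp : SigmaOneIn p X) (hq : SigmaOneIn q X) :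
    SigmaOneIn (fun a => p a ∧ q a) X := by
  obtain ⟨d, hd, hmono, h⟩ := hp.exists_monotone
  obtain ⟨d', hd', hmono', h'⟩ := hq.exists_monotone
  refine ⟨fun a => d a && d' a, by fun_prop, fun a => ?_⟩
  simp only [h, h', Bool.and_eq_true]
  constructor
  · rintro ⟨⟨s, hs⟩, t, ht⟩
    exact ⟨max s t, Bool.le_iff_imp.1 (hmono a (le_max_left s t)) hs,
      Bool.le_iff_imp.1 (hmono' a (le_max_right s t)) ht⟩
  · exact fun ⟨t, ht, ht'⟩ => ⟨⟨t, ht⟩, t, ht'⟩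

@[fun_prop] theorem or {p q : α → Prop} (hp : SigmaOneIn p X) (hq : SigmaOneIn q X) :
    SigmaOneIn (fun a => p a ∨ q a) X := by
  obtain ⟨d, hd, h⟩ := hp
  obtain ⟨d', hd', h'⟩ := hq
  refine ⟨fun a => d a || d' a, by fun_prop, fun a => ?_⟩
  simp only [h, h', ← exists_or, Bool.or_eq_true]

@[fun_prop] theorem projection {p : α → β → Prop}
    (hp : SigmaOneIn (fun q : α × β => p q.1 q.2) X) : SigmaOneIn (fun a => ∃ b, p a b) X := by
  obtain ⟨d, hd, h⟩ := hp
  refine ⟨fun q => ((Encodable.decode (α := β) q.1.length.unpair.1).map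
    fun b => d (q.1.take q.1.length.unpair.2, (q.2, b))).getD false, ?_, fun a => ?_⟩
  · refine Computable.option_getD (Computable.option_map (by fun_prop) ?_) (by fun_prop)
    change Computable fun r : (List Bool × α) × β =>
      d (r.1.1.take r.1.1.length.unpair.2, (r.1.2, r.2))
    fun_prop
  · have h' : ∀ b, p a b ↔ ∃ t, d (strPrefix X t, a, b) = true := fun b => h (a, b)
    simp only [h', length_strPrefix, take_strPrefix]
    constructor
    · rintro ⟨b, t, ht⟩
      refine ⟨Nat.pair (Encodable.encode b) t, ?_⟩
      simpa only [Nat.unpair_pair, Encodable.encodek, Option.map_some, Option.getD_some,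
        min_eq_left (Nat.right_le_pair _ _)] using ht
    · rintro ⟨u, hu⟩
      cases hb : Encodable.decode (α := β) u.unpair.1 with
      | none => simp [hb] at hu
      | some b => exact ⟨b, _, by simpa [hb] using hu⟩

@[fun_prop] theorem forall_lt {f : α → ℕ} {p : α → ℕ → Prop} (hf : Computable f)
    (hp : SigmaOneIn (fun q : α × ℕ => p q.1 q.2) X) :
    SigmaOneIn (fun a => ∀ i < f a, p a i) X := by
  obtain ⟨d, hd, hmono, h⟩ := hp.exists_monotone
  refine ⟨fun q => (List.range (f q.2)).all fun i => d (q.1, (q.2, i)),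
    computable_all_range (by fun_prop) (by fun_prop), fun a => ?_⟩
  simp only [List.all_eq_true, List.mem_range]
  refine ⟨fun hall => ?_, fun ⟨t, ht⟩ i hi => (h (a, i)).2 ⟨t, ht i hi⟩⟩
  choose! t ht using fun i hi => (h (a, i)).1 (hall i hi)
  exact ⟨(Finset.range (f a)).sup t, fun i hi =>
    Bool.le_iff_imp.1 (hmono (a, i) (Finset.le_sup (f := t) (Finset.mem_range.2 hi))) (ht i hi)⟩

@[fun_prop] theorem mem {f : α → β} {l : α → List β} (hf : Computable f) (hl : Computable l) :
    SigmaOneIn (fun a => f a ∈ l a) X := by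
  simp only [List.mem_iff_getElem?]
  fun_prop

@[fun_prop] theorem forall_mem {l : α → List β} {p : α → β → Prop} (hl : Computable l)
    (hp : SigmaOneIn (fun q : α × β => p q.1 q.2) X) :
    SigmaOneIn (fun a => ∀ b ∈ l a, p a b) X := by
  have h : SigmaOneIn (fun a => ∀ i < (l a).length, ∃ b, (l a)[i]? = some b ∧ p a b) X :=
    .forall_lt (by fun_prop) (.projection (.and (by fun_prop)
      (hp.comp (f := fun r : (α × ℕ) × β => (r.1.1, r.2)) (by fun_prop))))
  refine h.of_iff fun a => ⟨fun h i hi => ?_, fun h b hb => ?_⟩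
  · exact ⟨_, List.getElem?_eq_getElem hi, h _ (List.getElem_mem hi)⟩
  · obtain ⟨i, hi, rfl⟩ := List.getElem_of_mem hb
    obtain ⟨b, hb, hpb⟩ := h i hi
    rwa [List.getElem?_eq_getElem hi, Option.some_inj.1 hb] at *

@[fun_prop] theorem subset {l l' : α → List β} (hl : Computable l) (hl' : Computable l') :
    SigmaOneIn (fun a => l a ⊆ l' a) X := by
  simp only [List.subset_def]
  fun_prop

@[fun_prop] theorem nodup {l : α → List β} (hl : Computable l) :
    SigmaOneIn (fun a => (l a).Nodup) X := by
  have h : SigmaOneIn (fun a => ∀ j < (l a).length, ∀ i < j, (l a)[i]? ≠ (l a)[j]?) X := by fun_prop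
  refine h.of_iff fun a => List.nodup_iff_getElem?_ne_getElem?.trans ?_
  exact ⟨fun h j hj i hij => h i j hij hj, fun h i j hij hj => h j hj i hij⟩

@[fun_prop] theorem isPrefixOf {f : α → List Bool} (hf : Computable f) :
    SigmaOneIn (fun a => IsPrefixOf (f a) X) X := by
  refine ⟨fun q => decide (q.1 = f q.2), by fun_prop, fun a => ?_⟩
  simp only [decide_eq_true_iff]
  exact ⟨fun h => ⟨_, isPrefixOf_iff_strPrefix_eq.1 h⟩, fun ⟨t, ht⟩ => ht ▸ isPrefixOf_strPrefix t⟩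

@[fun_prop] theorem strPrefix_eq {f : α → ℕ} {g : α → List Bool} (hf : Computable f)
    (hg : Computable g) : SigmaOneIn (fun a => strPrefix X (f a) = g a) X := by
  have hp : SigmaOneIn (fun a => IsPrefixOf (g a) X ∧ (g a).length = f a) X := by fun_prop
  refine hp.of_iff fun a => ?_
  rw [isPrefixOf_iff_strPrefix_eq]
  exact ⟨fun h => by rw [← h, length_strPrefix]; exact ⟨rfl, rfl⟩, fun ⟨h, h'⟩ => h' ▸ h⟩

@[fun_prop] theorem oracle_eq {f : α → ℕ} {g : α → Bool} (hf : Computable f) (hg : Computable g) :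
    SigmaOneIn (fun a => X (f a) = g a) X := by
  refine ⟨fun q => decide (q.1[f q.2]? = some (g q.2)), by fun_prop, fun a => ?_⟩
  simp only [getElem?_strPrefix, decide_eq_true_iff]
  refine ⟨fun h => ⟨f a + 1, by rw [if_pos (Nat.lt_succ_self _), h]⟩, fun ⟨t, ht⟩ => ?_⟩
  split_ifs at ht
  exact Option.some_inj.1 ht

theorem of_rePred {p : α → Prop} (hp : REPred p) : SigmaOneIn p X := by
  obtain ⟨c, hc⟩ := exists_code_dom_iff hp
  refine ⟨fun q => (c.evaln q.1.length (Encodable.encode q.2)).isSome, by fun_prop, fun a => ?_⟩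
  simp only [← hc, eval_dom_iff, length_strPrefix]

theorem rePred {p : α → Prop} (hp : SigmaOneIn p emptyOracle) : REPred p := by
  obtain ⟨d, hd, h⟩ := hp
  have hpre : Computable (strPrefix emptyOracle) :=
    (Primrec.list_map Primrec.list_range (Primrec₂.const false)).to_comp
  exact rePred_of_stages (d := fun q => d (strPrefix emptyOracle q.2, q.1)) (by fun_prop) h

theorem of_emptyOracle {p : α → Prop} (hp : SigmaOneIn p emptyOracle) : SigmaOneIn p X :=
  of_rePred hp.rePred

@[fun_prop] theorem wEnum {f g : α → ℕ} (hf : Computable f) (hg : Computable g) :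
    SigmaOneIn (fun a => WEnum (f a) (g a)) X :=
  (of_rePred rePred_wEnum).comp (f := fun a => (f a, g a)) (by fun_prop)

@[fun_prop] theorem oracleComputes {e n m : α → ℕ} (he : Computable e) (hn : Computable n)
    (hm : Computable m) : SigmaOneIn (fun a => OracleComputes (e a) X (n a) (m a)) X := by
  unfold OracleComputes
  fun_prop

theorem exists_index {p : α → ℕ → ℕ → Prop}
    (hp : SigmaOneIn (fun q : α × ℕ × ℕ => p q.1 q.2.1 q.2.2) X) :
    ∃ f : α → ℕ, Computable f ∧ ∀ a n m, OracleComputes (f a) X n m ↔ p a n m := by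
  obtain ⟨d, hd, h⟩ := hp
  have hre : REPred fun q : α × (List Bool × ℕ × ℕ) => d (q.2.1, (q.1, q.2.2)) = true :=
    (of_computable (X := emptyOracle) (by fun_prop)).rePred
  obtain ⟨f, hf, hfd⟩ := exists_wEnum_iff
    (p := fun a (b : List Bool × ℕ × ℕ) => d (b.1, (a, b.2)) = true) hre
  refine ⟨f, hf, fun a n m => ?_⟩
  refine Iff.trans ?_
    ((exists_isPrefixOf (q := fun σ => d (σ, a, n, m) = true)).trans (h (a, n, m)).symm)
  exact exists_congr fun σ => and_congr_right fun _ => hfd a (σ, n, m)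

end SigmaOneIn

/-! ### Turing reducibility -/

section TuringReducibility

variable {α β : Type*} [Primcodable α] [Primcodable β] {A B C R X : ℕ → Bool}

theorem SigmaOneIn.eq_of_turingLE (hBX : TuringLE B X) {f : α → ℕ} {g : α → Bool}
    (hf : Computable f) (hg : Computable g) : SigmaOneIn (fun a => B (f a) = g a) X := by
  obtain ⟨e, he⟩ := hBX
  have hp : SigmaOneIn (fun a => OracleComputes e X (f a) (bif g a then 1 else 0)) X := by fun_prop
  refine hp.of_iff fun a => ?_
  rw [he]
  cases hB : B (f a) <;> cases g a <;> simp [natOfBool, hB]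

attribute [fun_prop] SigmaOneIn.eq_of_turingLE

theorem turingLE_of_sigmaOneIn (htrue : SigmaOneIn (fun n => B n = true) X)
    (hfalse : SigmaOneIn (fun n => B n = false) X) : TuringLE B X := by
  have hp : SigmaOneIn (fun q : Unit × ℕ × ℕ =>
      (B q.2.1 = true ∧ q.2.2 = 1) ∨ (B q.2.1 = false ∧ q.2.2 = 0)) X :=
    ((htrue.comp (by fun_prop)).and (by fun_prop)).or
      ((hfalse.comp (by fun_prop)).and (by fun_prop))
  obtain ⟨f, -, hf⟩ := SigmaOneIn.exists_index
    (p := fun _ n m => (B n = true ∧ m = 1) ∨ (B n = false ∧ m = 0)) hp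
  refine ⟨f (), fun n m => ?_⟩
  rw [hf]
  cases hB : B n <;> simp [natOfBool, hB]

theorem SigmaOneIn.trans {p : α → Prop} (hp : SigmaOneIn p B) (hBX : TuringLE B X) :
    SigmaOneIn p X := by
  obtain ⟨d, hd, h⟩ := hp
  have hX : SigmaOneIn (fun a => ∃ σ : List Bool,
      (∀ i < σ.length, ∃ b, B i = b ∧ σ[i]? = some b) ∧ d (σ, a) = true) X := by
    fun_prop (disch := assumption)
  refine hX.of_iff fun a => ?_
  rw [h, ← exists_isPrefixOf (q := fun σ => d (σ, a) = true)]
  simp only [isPrefixOf_iff_getElem?, exists_eq_left']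

theorem turingLE_trans (hAB : TuringLE A B) (hBC : TuringLE B C) : TuringLE A C :=
  turingLE_of_sigmaOneIn (SigmaOneIn.trans (by fun_prop (disch := assumption)) hBC)
    (SigmaOneIn.trans (by fun_prop (disch := assumption)) hBC)

theorem emptyOracle_turingLE : TuringLE emptyOracle X :=
  turingLE_of_sigmaOneIn (SigmaOneIn.of_emptyOracle (by fun_prop))
    (SigmaOneIn.of_emptyOracle (by fun_prop))

theorem jump_eq_true_iff {e : ℕ} : jump X e = true ↔ ∃ m, OracleComputes e X e m := by
  simp only [jump, decide_eq_true_iff]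

theorem SigmaOneIn.exists_jump_index {p : α → Prop} (hp : SigmaOneIn p X) :
    ∃ f : α → ℕ, Computable f ∧ ∀ a, jump X (f a) = true ↔ p a := by
  obtain ⟨f, hf, h⟩ := SigmaOneIn.exists_index (p := fun a _ _ => p a)
    (show SigmaOneIn (fun q : α × ℕ × ℕ => p q.1) X by fun_prop)
  exact ⟨f, hf, fun a => by simp only [jump_eq_true_iff, h, exists_const]⟩

theorem SigmaOneIn.to_jump {p : α → Prop} (hp : SigmaOneIn p X) : SigmaOneIn p (jump X) := by
  obtain ⟨f, hf, h⟩ := hp.exists_jump_index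
  exact (oracle_eq hf (Computable.const true)).of_iff fun a => (h a).symm

theorem SigmaOneIn.not_jump {p : α → Prop} (hp : SigmaOneIn p X) :
    SigmaOneIn (fun a => ¬ p a) (jump X) := by
  obtain ⟨f, hf, h⟩ := hp.exists_jump_index
  exact (oracle_eq hf (Computable.const false)).of_iff fun a => by rw [← h, Bool.not_eq_true]

theorem turingLE_jump : TuringLE X (jump X) :=
  turingLE_of_sigmaOneIn (SigmaOneIn.to_jump (by fun_prop)) (SigmaOneIn.to_jump (by fun_prop))

theorem jump_turingLE_jump (hAB : TuringLE A B) : TuringLE (jump A) (jump B) := by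
  have hp : SigmaOneIn (fun e => ∃ m, OracleComputes e A e m) B :=
    SigmaOneIn.trans (by fun_prop) hAB
  refine turingLE_of_sigmaOneIn (hp.to_jump.of_iff fun e => ?_) (hp.not_jump.of_iff fun e => ?_)
  · exact jump_eq_true_iff
  · rw [← jump_eq_true_iff, Bool.not_eq_true]

theorem not_jump_turingLE : ¬ TuringLE (jump X) X := by
  intro h
  obtain ⟨f, -, hf⟩ := SigmaOneIn.exists_index (α := Unit)
    (p := fun _ n _ => jump X n = false) (by fun_prop (disch := assumption))
  have hdiag : jump X (f ()) = true ↔ jump X (f ()) = false :=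
    jump_eq_true_iff.trans (by simp only [hf, exists_const])
  cases h' : jump X (f ()) <;> simp [h'] at hdiag

theorem turingLE_joinSet_left : TuringLE A (joinSet A R) := by
  have h : ∀ n, A n = joinSet A R (2 * n) := fun n => by simp [joinSet]
  exact turingLE_of_sigmaOneIn (by simp only [h]; fun_prop) (by simp only [h]; fun_prop)

theorem turingLE_joinSet_right : TuringLE R (joinSet A R) := by
  have h : ∀ n, R n = joinSet A R (2 * n + 1) := fun n => by simp [joinSet, Nat.mul_add_div]
  exact turingLE_of_sigmaOneIn (by simp only [h]; fun_prop) (by simp only [h]; fun_prop)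

theorem joinSet_turingLE (hA : TuringLE A X) (hR : TuringLE R X) : TuringLE (joinSet A R) X := by
  have h : ∀ b, SigmaOneIn (fun n => joinSet A R n = b) X := by
    intro b
    have hp : SigmaOneIn (fun n =>
        (n % 2 = 0 ∧ A (n / 2) = b) ∨ (n % 2 = 1 ∧ R (n / 2) = b)) X := by
      fun_prop (disch := assumption)
    refine hp.of_iff fun n => ?_
    rcases Nat.mod_two_eq_zero_or_one n with hn | hn <;> simp [joinSet, hn]
  exact turingLE_of_sigmaOneIn (h true) (h false)

end TuringReducibility

section Uniformization

variable {α β : Type*} [Primcodable α] [Primcodable β] {X : ℕ → Bool}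

theorem SigmaOneIn.find_eq {p : α → ℕ → Prop} [∀ a, DecidablePred (p a)]
    (hp : SigmaOneIn (fun q : α × ℕ => p q.1 q.2) X)
    (hnp : SigmaOneIn (fun q : α × ℕ => ¬ p q.1 q.2) X) (hex : ∀ a, ∃ n, p a n) :
    SigmaOneIn (fun q : α × ℕ => Nat.find (hex q.1) = q.2) X := by
  have h : SigmaOneIn (fun q : α × ℕ => p q.1 q.2 ∧ ∀ i < q.2, ¬ p q.1 i) X :=
    hp.and (.forall_lt (by fun_prop)
      (hnp.comp (f := fun r : (α × ℕ) × ℕ => (r.1.1, r.2)) (by fun_prop)))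
  exact h.of_iff fun q => Nat.find_eq_iff _

theorem SigmaOneIn.exists_selector {p : α → β → Prop}
    (hp : SigmaOneIn (fun q : α × β => p q.1 q.2) X) (htotal : ∀ a, ∃ b, p a b) :
    ∃ f : α → β, (∀ a, p a (f a)) ∧ SigmaOneIn (fun q : α × β => f q.1 = q.2) X := by
  obtain ⟨d, hd, h⟩ := hp
  let Accepts (a : α) (u : ℕ) (b : Bool) : Prop :=
    ∃ (s : ℕ × β) (σ : List Bool),
      Encodable.decode u = some s ∧ strPrefix X s.1 = σ ∧ d (σ, (a, s.2)) = b
  have hAccepts : SigmaOneIn (fun q : (α × ℕ) × Bool => Accepts q.1.1 q.1.2 q.2) X := by fun_prop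
  have hex : ∀ a, ∃ u, Accepts a u true := by
    intro a
    obtain ⟨b, hb⟩ := htotal a
    obtain ⟨t, ht⟩ := (h (a, b)).1 hb
    exact ⟨_, (t, b), _, Encodable.encodek _, rfl, ht⟩
  have hrej : SigmaOneIn (fun q : α × ℕ => ¬ Accepts q.1 q.2 true) X := by
    have hrej' : SigmaOneIn (fun q : α × ℕ =>
        Encodable.decode (α := ℕ × β) q.2 = none ∨ Accepts q.1 q.2 false) X :=
      .or (by fun_prop) (hAccepts.comp (f := fun q => (q, false)) (by fun_prop))
    refine hrej'.of_iff fun q => ?_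
    cases hs : Encodable.decode (α := ℕ × β) q.2 <;>
      simp only [Accepts, hs, reduceCtorEq, Option.some_inj, exists_and_left, exists_eq_left',
        false_and, exists_false, not_false_iff, true_or, false_or, Bool.not_eq_true]
  classical
  choose s σ hs hσ hds using fun a => Nat.find_spec (hex a)
  refine ⟨fun a => (s a).2, fun a => (h _).2 ⟨_, hσ a ▸ hds a⟩, ?_⟩
  have hfind := SigmaOneIn.find_eq (p := fun a u => Accepts a u true)
    (hAccepts.comp (f := fun q => (q, true)) (by fun_prop)) hrej hex
  have hgraph : SigmaOneIn (fun q : α × β => ∃ u t,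
      Nat.find (hex q.1) = u ∧ Encodable.decode u = some (t, q.2)) X :=
    .projection (.projection (.and (hfind.comp (f := fun r : ((α × β) × ℕ) × ℕ => (r.1.1.1, r.1.2))
      (by fun_prop)) (by fun_prop)))
  refine hgraph.of_iff fun q => ?_
  simp only [exists_and_left, exists_eq_left', hs, Option.some_inj, Prod.ext_iff]

theorem SigmaOneIn.graph_of_step {D : ℕ → β → β → Prop}
    (hD : SigmaOneIn (fun q : ℕ × β × β => D q.1 q.2.1 q.2.2) X) {f : ℕ → β}
    (hf : ∀ s b, D s (f s) b ↔ f (s + 1) = b) : SigmaOneIn (fun q : ℕ × β => f q.1 = q.2) X := by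
  have hp : SigmaOneIn (fun q : ℕ × β => ∃ l : List β, l[0]? = some (f 0) ∧
      (∀ i < q.1, ∃ b b', l[i]? = some b ∧ l[i + 1]? = some b' ∧ D i b b') ∧
      l[q.1]? = some q.2) X := by
    refine .projection (.and (by fun_prop) (.and (.forall_lt (by fun_prop) (.projection
      (.projection (.and (by fun_prop) (.and (by fun_prop) ?_))))) (by fun_prop)))
    exact hD.comp (f := fun r : ((((ℕ × β) × List β) × ℕ) × β) × β => (r.1.1.2, r.1.2, r.2))
      (by fun_prop)
  refine hp.of_iff fun ⟨s, c⟩ => ⟨fun hc => ?_, fun ⟨l, hzero, hstep, hlast⟩ => ?_⟩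
  · have hget : ∀ i ≤ s, ((List.range (s + 1)).map f)[i]? = some (f i) := fun i hi => by
      simp [List.getElem?_range (Nat.lt_succ_of_le hi)]
    exact ⟨(List.range (s + 1)).map f, hget 0 (Nat.zero_le s), fun i hi =>
      ⟨f i, f (i + 1), hget i hi.le, hget (i + 1) hi, (hf i _).2 rfl⟩, by rw [hget s le_rfl, hc]⟩
  · have hget : ∀ i ≤ s, l[i]? = some (f i) := by
      intro i
      induction i with
      | zero => exact fun _ => hzero
      | succ i ih =>
        intro hi
        obtain ⟨b, b', hb, hb', hDb⟩ := hstep i hi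
        rw [ih (Nat.le_of_succ_le hi), Option.some_inj] at hb
        subst hb
        rw [hb', (hf i b').1 hDb]
    rwa [hget s le_rfl, Option.some_inj] at hlast

end Uniformization

section Cylinders

variable {σ τ : List Bool} {Z : ℕ → Bool}

theorem mem_cylinder_iff : Z ∈ cylinder σ ↔ strPrefix Z σ.length = σ :=
  isPrefixOf_iff_strPrefix_eq

theorem cylinder_strPrefix (n : ℕ) : cylinder (strPrefix Z n) = PiNat.cylinder Z n := by
  ext Y
  refine isPrefixOf_iff_getElem?.trans ?_
  simp only [length_strPrefix, PiNat.mem_cylinder_iff]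
  refine forall₂_congr fun i hi => ?_
  rw [getElem?_strPrefix, if_pos hi, Option.some_inj, eq_comm]

theorem cylinder_strPrefix_subset {m n : ℕ} (hmn : m ≤ n) :
    cylinder (strPrefix Z n) ⊆ cylinder (strPrefix Z m) := by
  simpa only [cylinder_strPrefix] using PiNat.cylinder_anti Z hmn

theorem range_cylinder : Set.range (_root_.cylinder) =
    {s | ∃ (Z : ℕ → Bool) (n : ℕ), s = PiNat.cylinder Z n} := by
  ext s
  constructor
  · rintro ⟨σ, rfl⟩
    have hσ : strPrefix (fun i => (σ[i]?).getD false) σ.length = σ := by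
      refine List.ext_getElem? fun i => ?_
      rw [getElem?_strPrefix]
      split_ifs with hi <;> simp [hi]
    exact ⟨_, σ.length, by rw [← cylinder_strPrefix, hσ]⟩
  · rintro ⟨Z, n, rfl⟩
    exact ⟨_, cylinder_strPrefix n⟩

theorem isTopologicalBasis_cylinder :
    TopologicalSpace.IsTopologicalBasis (Set.range (_root_.cylinder)) :=
  range_cylinder ▸ PiNat.isTopologicalBasis_cylinders _

theorem isOpen_cylinder (σ : List Bool) : IsOpen (cylinder σ) :=
  isTopologicalBasis_cylinder.isOpen ⟨σ, rfl⟩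

theorem isPiSystem_cylinder : IsPiSystem (Set.range (_root_.cylinder)) := by
  rintro _ ⟨σ, rfl⟩ _ ⟨τ, rfl⟩ ⟨Z, hσ, hτ⟩
  rw [← mem_cylinder_iff.1 hσ, ← mem_cylinder_iff.1 hτ]
  rcases le_total σ.length τ.length with h | h
  · exact ⟨_, (Set.inter_eq_right.2 (cylinder_strPrefix_subset h)).symm⟩
  · exact ⟨_, (Set.inter_eq_left.2 (cylinder_strPrefix_subset h)).symm⟩

theorem isPrefixOf_append_singleton {b : Bool} :
    IsPrefixOf (σ ++ [b]) Z ↔ IsPrefixOf σ Z ∧ Z σ.length = b := by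
  have hsucc : strPrefix Z (σ.length + 1) = strPrefix Z σ.length ++ [Z σ.length] := by
    simp only [strPrefix, List.range_succ, List.map_append, List.map_singleton]
  rw [isPrefixOf_iff_strPrefix_eq, isPrefixOf_iff_strPrefix_eq, List.length_append,
    List.length_singleton, hsucc, List.append_eq_append_iff_of_size_eq_left (by simp),
    List.singleton_inj]

theorem cylinder_subset_cylinder (h : σ <+: τ) : cylinder τ ⊆ cylinder σ := by
  obtain ⟨ρ, rfl⟩ := h
  refine fun Z hZ => isPrefixOf_iff_getElem?.2 fun i hi => ?_
  rw [← isPrefixOf_iff_getElem?.1 hZ i (by simp; omega), List.getElem?_append_left hi]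

theorem disjoint_cylinder (hστ : ¬ σ <+: τ) (hτσ : ¬ τ <+: σ) :
    Disjoint (cylinder σ) (cylinder τ) := by
  refine Set.disjoint_left.2 fun Z hσ hτ => ?_
  rw [← mem_cylinder_iff.1 hσ, ← mem_cylinder_iff.1 hτ] at hστ hτσ
  rcases le_total σ.length τ.length with h | h
  · exact hστ (strPrefix_prefix_strPrefix h)
  · exact hτσ (strPrefix_prefix_strPrefix h)

theorem mem_openOf_iff {S : Set (List Bool)} : Z ∈ openOf S ↔ ∃ n, strPrefix Z n ∈ S := by
  simp only [openOf, Set.mem_iUnion, exists_prop]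
  exact (exists_congr fun _ => and_comm).trans exists_isPrefixOf

theorem isOpen_openOf (S : Set (List Bool)) : IsOpen (openOf S) :=
  isOpen_biUnion fun σ _ => isOpen_cylinder σ

theorem openOf_cylinder_subset {U : Set (ℕ → Bool)} (hU : IsOpen U) :
    openOf {σ | cylinder σ ⊆ U} = U := by
  refine Set.Subset.antisymm (Set.iUnion₂_subset fun _ h => h) fun Z hZ => ?_
  obtain ⟨_, ⟨σ, rfl⟩, hσ, hσU⟩ := isTopologicalBasis_cylinder.exists_subset_of_mem_open hZ hU
  exact Set.mem_biUnion hσU hσ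

end Cylinders

/-! ### The uniform measure -/

section UniformMeasure

theorem measurable_binaryDigits : Measurable binaryDigits := by
  refine measurable_pi_iff.2 fun n => ?_
  have hdigit : Measurable fun z : ℤ => decide (z % 2 = 1) := measurable_from_top
  exact hdigit.comp (by fun_prop : Measurable fun x : ℝ => ⌊x * 2 ^ (n + 1)⌋)

/-- The natural number whose binary expansion is `σ`, most significant digit first. -/
def binaryValue (σ : List Bool) : ℕ := σ.foldl (fun v b => 2 * v + natOfBool b) 0

@[fun_prop] theorem computable_binaryValue {α : Type*} [Primcodable α] {g : α → List Bool}
    (hg : Computable g) : Computable fun a => binaryValue (g a) := by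
  have hfold : Primrec binaryValue := by
    refine Primrec.list_foldl (h := fun _ (q : ℕ × Bool) => 2 * q.1 + natOfBool q.2) Primrec.id
      (Primrec.const 0) ?_
    exact Primrec.nat_add.comp
      (Primrec.nat_mul.comp (Primrec.const 2) (Primrec.fst.comp Primrec.snd))
      ((Primrec.dom_bool natOfBool).comp (Primrec.snd.comp Primrec.snd))
  exact hfold.to_comp.comp hg

theorem binaryValue_append_singleton (σ : List Bool) (b : Bool) :
    binaryValue (σ ++ [b]) = 2 * binaryValue σ + natOfBool b := by
  simp [binaryValue]

theorem natOfBool_le_one (b : Bool) : natOfBool b ≤ 1 := by cases b <;> decide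

theorem binaryValue_lt (σ : List Bool) : binaryValue σ < 2 ^ σ.length := by
  induction σ using List.reverseRecOn with
  | nil => simp [binaryValue]
  | append_singleton σ b ih =>
    have := natOfBool_le_one b
    simp only [binaryValue_append_singleton, List.length_append, List.length_singleton, pow_succ]
    omega

theorem isPrefixOf_binaryDigits_iff_floor {x : ℝ} (hx : x ∈ Set.Ico (0 : ℝ) 1) (σ : List Bool) :
    IsPrefixOf σ (binaryDigits x) ↔ ⌊x * 2 ^ σ.length⌋ = binaryValue σ := by
  induction σ using List.reverseRecOn with
  | nil =>
    refine iff_of_true (fun i => i.elim0) ?_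
    simpa [binaryValue, Int.floor_eq_zero_iff] using hx
  | append_singleton σ b ih =>
    have hhalf : ⌊x * 2 ^ σ.length⌋ = ⌊x * 2 ^ (σ.length + 1)⌋ / 2 := by
      rw [show x * 2 ^ σ.length = x * 2 ^ (σ.length + 1) / (2 : ℕ) by push_cast; ring]
      exact Int.floor_div_natCast _ 2
    rw [isPrefixOf_append_singleton, ih, hhalf, binaryValue_append_singleton]
    simp only [binaryDigits, List.length_append, List.length_singleton]
    cases b <;> simp [natOfBool] <;> omega

/-- The set of reals in `[0, 1)` whose binary expansion starts with `σ`. -/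
def dyadicInterval (σ : List Bool) : Set ℝ :=
  Set.Ico (binaryValue σ / 2 ^ σ.length) ((binaryValue σ + 1) / 2 ^ σ.length)

theorem mem_dyadicInterval_iff {σ : List Bool} {x : ℝ} :
    x ∈ dyadicInterval σ ↔ x ∈ Set.Ico (0 : ℝ) 1 ∧ IsPrefixOf σ (binaryDigits x) := by
  have hpos : (0 : ℝ) < 2 ^ σ.length := by positivity
  have hfloor : x ∈ dyadicInterval σ ↔ ⌊x * 2 ^ σ.length⌋ = binaryValue σ := by
    rw [dyadicInterval, Set.mem_Ico, div_le_iff₀ hpos, lt_div_iff₀ hpos, Int.floor_eq_iff,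
      Int.cast_natCast]
  rw [hfloor]
  refine ⟨fun h => ?_, fun h => (isPrefixOf_binaryDigits_iff_floor h.1 σ).1 h.2⟩
  have hle : (binaryValue σ : ℝ) + 1 ≤ 2 ^ σ.length := by exact_mod_cast binaryValue_lt σ
  have hx := hfloor.2 h
  have hunit : x ∈ Set.Ico (0 : ℝ) 1 :=
    ⟨le_trans (by positivity) hx.1, hx.2.trans_le ((div_le_one hpos).2 hle)⟩
  exact ⟨hunit, (isPrefixOf_binaryDigits_iff_floor hunit σ).2 h⟩

theorem volume_dyadicInterval (σ : List Bool) : volume (dyadicInterval σ) = 2⁻¹ ^ σ.length := by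
  rw [dyadicInterval, Real.volume_Ico, ← sub_div, add_sub_cancel_left, one_div,
    ENNReal.ofReal_inv_of_pos (by positivity), ENNReal.ofReal_pow zero_le_two,
    ENNReal.ofReal_ofNat, ENNReal.inv_pow]

theorem μCantor_cylinder (σ : List Bool) : μCantor (cylinder σ) = 2⁻¹ ^ σ.length := by
  have hpreimage : binaryDigits ⁻¹' cylinder σ ∩ Set.Ico 0 1 = dyadicInterval σ :=
    Set.ext fun x => and_comm.trans mem_dyadicInterval_iff.symm
  have hmeas := (isOpen_cylinder σ).measurableSet
  rw [μCantor, Measure.map_apply measurable_binaryDigits hmeas,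
    Measure.restrict_apply (measurable_binaryDigits hmeas), hpreimage, volume_dyadicInterval]

instance : IsProbabilityMeasure μCantor := by
  have huniv : cylinder [] = Set.univ := Set.eq_univ_of_forall fun Z i => i.elim0
  exact ⟨by rw [← huniv, μCantor_cylinder, List.length_nil, pow_zero]⟩

theorem measureReal_cylinder (σ : List Bool) : μCantor.real (cylinder σ) = 2⁻¹ ^ σ.length := by
  simp [measureReal_def, μCantor_cylinder]

theorem μCantor_eq_infinitePi :
    μCantor = Measure.infinitePi fun _ : ℕ => (PMF.uniformOfFintype Bool).toMeasure := by
  refine ext_of_generate_finite _ ?_ isPiSystem_cylinder ?_ (by simp)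
  · rw [← isTopologicalBasis_cylinder.borel_eq_generateFrom]
    exact BorelSpace.measurable_eq
  · rintro _ ⟨τ, rfl⟩
    have hpi : cylinder τ = Set.pi (Finset.range τ.length) fun i => {(τ[i]?).getD false} := by
      ext Z
      refine isPrefixOf_iff_getElem?.trans ?_
      simp only [Set.mem_pi, Finset.coe_range, Set.mem_Iio, Set.mem_singleton_iff]
      exact forall₂_congr fun i hi => by simp [hi, eq_comm]
    rw [μCantor_cylinder, hpi, Measure.infinitePi_pi _ fun _ _ => measurableSet_singleton _]
    simp

theorem measureReal_setOf_forall_mem_eq_true (F : Finset ℕ) :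
    μCantor.real {Z | ∀ i ∈ F, Z i = true} = 2⁻¹ ^ F.card := by
  have hpi : {Z : ℕ → Bool | ∀ i ∈ F, Z i = true} = Set.pi F fun _ => {true} := by ext Z; simp
  rw [hpi, measureReal_def, μCantor_eq_infinitePi,
    Measure.infinitePi_pi _ fun _ _ => measurableSet_singleton _]
  simp

theorem tendsto_measureReal_iUnion_atTop {Ω : Type*} [MeasurableSpace Ω] {μ : Measure Ω}
    [IsFiniteMeasure μ] {W : ℕ → Set Ω} (hW : Monotone W) :
    Filter.Tendsto (fun L => μ.real (W L)) Filter.atTop (nhds (μ.real (⋃ L, W L))) :=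
  (ENNReal.tendsto_toReal (measure_ne_top _ _)).comp (tendsto_measure_iUnion_atTop hW)

theorem measureReal_openOf_finset {D : Finset (List Bool)} {L : ℕ} (hD : ∀ ρ ∈ D, ρ.length = L) :
    μCantor.real (openOf D) = D.card * 2⁻¹ ^ L := by
  have hbiUnion : openOf (D : Set (List Bool)) = ⋃ ρ ∈ D, cylinder ρ := rfl
  rw [hbiUnion, measureReal_biUnion_finset]
  · rw [Finset.sum_congr rfl fun ρ hρ => by rw [measureReal_cylinder, hD ρ hρ], Finset.sum_const,
      nsmul_eq_mul]
  · intro σ hσ τ hτ hne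
    have hlen : σ.length = τ.length := (hD σ hσ).trans (hD τ hτ).symm
    exact disjoint_cylinder (fun h => hne (h.eq_of_length hlen))
      fun h => hne (h.eq_of_length hlen.symm).symm
  · exact fun σ _ => (isOpen_cylinder σ).measurableSet

theorem sum_inv_two_pow_length_le_one {ι : Type*} {F : Finset ι} {s : ι → List Bool}
    (hs : (F : Set ι).Pairwise fun a b => ¬ s a <+: s b) :
    ∑ a ∈ F, (2⁻¹ : ℝ) ^ (s a).length ≤ 1 := by
  calc ∑ a ∈ F, (2⁻¹ : ℝ) ^ (s a).length = ∑ a ∈ F, μCantor.real (cylinder (s a)) := by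
        simp only [measureReal_cylinder]
    _ = μCantor.real (⋃ a ∈ F, cylinder (s a)) :=
        (measureReal_biUnion_finset (fun a ha b hb hab =>
          disjoint_cylinder (hs ha hb hab) (hs hb ha hab.symm))
          fun a _ => (isOpen_cylinder _).measurableSet).symm
    _ ≤ 1 := measureReal_le_one

end UniformMeasure

section Levels

variable {S : Set (List Bool)} {L : ℕ} {ρ : List Bool} {Z : ℕ → Bool}

/-- The strings of length `L` with an initial segment in `S`: the approximation of `openOf S` at
level `L`. -/
noncomputable def levelStrings (S : Set (List Bool)) (L : ℕ) : Finset (List Bool) :=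
  ((List.finite_length_eq Bool L).inter_of_left {ρ | ∃ i, ρ.take i ∈ S}).toFinset

theorem mem_levelStrings : ρ ∈ levelStrings S L ↔ ρ.length = L ∧ ∃ i, ρ.take i ∈ S := by
  simp [levelStrings]

theorem mem_openOf_levelStrings :
    Z ∈ openOf (levelStrings S L) ↔ ∃ i ≤ L, strPrefix Z i ∈ S := by
  simp only [mem_openOf_iff, Finset.mem_coe, mem_levelStrings, length_strPrefix, take_strPrefix,
    exists_eq_left]
  constructor
  · rintro ⟨i, hi⟩
    exact ⟨min i L, min_le_right i L, hi⟩
  · rintro ⟨i, hiL, hi⟩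
    exact ⟨i, by rwa [min_eq_left hiL]⟩

theorem monotone_openOf_levelStrings (S : Set (List Bool)) :
    Monotone fun L => openOf (levelStrings S L) := by
  intro L L' hL Z
  simp only [mem_openOf_levelStrings]
  exact fun ⟨i, hi, hS⟩ => ⟨i, hi.trans hL, hS⟩

theorem iUnion_openOf_levelStrings (S : Set (List Bool)) :
    ⋃ L, openOf (levelStrings S L) = openOf S := by
  ext Z
  simp only [Set.mem_iUnion, mem_openOf_levelStrings]
  rw [mem_openOf_iff]
  exact ⟨fun ⟨_, i, _, hS⟩ => ⟨i, hS⟩, fun ⟨i, hS⟩ => ⟨i, i, le_rfl, hS⟩⟩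

theorem openOf_levelStrings_subset : openOf (levelStrings S L) ⊆ openOf S :=
  iUnion_openOf_levelStrings S ▸ Set.subset_iUnion (fun L => openOf (levelStrings S L)) L

theorem measureReal_openOf_levelStrings :
    μCantor.real (openOf (levelStrings S L)) = (levelStrings S L).card * 2⁻¹ ^ L :=
  measureReal_openOf_finset fun _ hρ => (mem_levelStrings.1 hρ).1

theorem lt_measureReal_openOf_iff {c : ℝ} : c < μCantor.real (openOf S) ↔
    ∃ (D : List (List Bool)) (L : ℕ), D.Nodup ∧
      (∀ ρ ∈ D, ρ.length = L ∧ ∃ i, ρ.take i ∈ S) ∧ c < D.length * 2⁻¹ ^ L := by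
  constructor
  · intro hc
    have hlim := tendsto_measureReal_iUnion_atTop (μ := μCantor) (monotone_openOf_levelStrings S)
    rw [iUnion_openOf_levelStrings] at hlim
    obtain ⟨L, hL⟩ := (hlim.eventually (lt_mem_nhds hc)).exists
    refine ⟨(levelStrings S L).toList, L, Finset.nodup_toList _, fun ρ hρ =>
      mem_levelStrings.1 (Finset.mem_toList.1 hρ), ?_⟩
    rwa [Finset.length_toList, ← measureReal_openOf_levelStrings]
  · rintro ⟨D, L, hnodup, hD, hc⟩
    have hsub : D.toFinset ⊆ levelStrings S L := fun ρ hρ =>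
      mem_levelStrings.2 (hD ρ (List.mem_toFinset.1 hρ))
    calc c < D.length * 2⁻¹ ^ L := hc
      _ ≤ (levelStrings S L).card * 2⁻¹ ^ L := by
        rw [← List.toFinset_card_of_nodup hnodup]
        gcongr
      _ = μCantor.real (openOf (levelStrings S L)) := measureReal_openOf_levelStrings.symm
      _ ≤ μCantor.real (openOf S) := measureReal_mono openOf_levelStrings_subset

theorem SigmaOneIn.lt_measureReal_openOf {α : Type*} [Primcodable α] {X : ℕ → Bool}
    {T : α → List Bool → Prop} {c e : α → ℕ}
    (hT : SigmaOneIn (fun q : α × List Bool => T q.1 q.2) X) (hc : Computable c)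
    (he : Computable e) :
    SigmaOneIn (fun a => (c a : ℝ) < μCantor.real (openOf {σ | T a σ}) * 2 ^ e a) X := by
  have hlevel : SigmaOneIn (fun q : (α × List (List Bool) × ℕ) × List Bool =>
      q.2.length = q.1.2.2 ∧ ∃ i, T q.1.1 (q.2.take i)) X :=
    .and (by fun_prop) (.projection (hT.comp (f := fun r :
      ((α × List (List Bool) × ℕ) × List Bool) × ℕ => (r.1.1.1, r.1.2.take r.2)) (by fun_prop)))
  have hcount : SigmaOneIn (fun a => ∃ D : List (List Bool) × ℕ, D.1.Nodup ∧
      (∀ ρ ∈ D.1, ρ.length = D.2 ∧ ∃ i, T a (ρ.take i)) ∧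
      c a * 2 ^ D.2 < D.1.length * 2 ^ e a) X :=
    .projection (.and (by fun_prop) (.and (.forall_mem (by fun_prop) hlevel) (by fun_prop)))
  refine hcount.of_iff fun a => ?_
  rw [← div_lt_iff₀ (by positivity), lt_measureReal_openOf_iff, Prod.exists]
  refine exists₂_congr fun D L => and_congr_right' (and_congr_right' ?_)
  rw [div_lt_iff₀ (by positivity), inv_pow, mul_right_comm, ← div_eq_mul_inv,
    lt_div_iff₀ (by positivity)]
  norm_cast

theorem exists_measureReal_cylinder_lt_two_mul_inter {Q : Set (ℕ → Bool)}
    (hQ : 0 < μCantor.real Q) :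
    ∃ τ, μCantor.real (cylinder τ) < 2 * μCantor.real (Q ∩ cylinder τ) := by
  by_contra! hsparse
  obtain ⟨U, hQU, hU, hlt⟩ : ∃ U, Q ⊆ U ∧ IsOpen U ∧ μCantor.real U < 2 * μCantor.real Q := by
    have hQ0 : μCantor Q ≠ 0 := fun h => by simp [measureReal_def, h] at hQ
    obtain ⟨U, hQU, hU, hlt⟩ := Q.exists_isOpen_lt_of_lt (μ := μCantor) (2 * μCantor Q)
      (by rw [two_mul]; exact ENNReal.lt_add_right (measure_ne_top _ _) hQ0)
    refine ⟨U, hQU, hU, ?_⟩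
    simpa [measureReal_def] using ENNReal.toReal_strict_mono (by finiteness) hlt
  have hlevel (L : ℕ) : 2 * μCantor.real (Q ∩ openOf (levelStrings {σ | cylinder σ ⊆ U} L)) ≤
      μCantor.real U := by
    set D := levelStrings {σ | cylinder σ ⊆ U} L
    have hinter : Q ∩ openOf (D : Set (List Bool)) = ⋃ ρ ∈ D, Q ∩ cylinder ρ :=
      Set.inter_iUnion₂ Q _
    calc 2 * μCantor.real (Q ∩ openOf (D : Set (List Bool)))
        ≤ ∑ ρ ∈ D, 2 * μCantor.real (Q ∩ cylinder ρ) := by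
          rw [hinter, ← Finset.mul_sum]
          gcongr
          exact measureReal_biUnion_finset_le _ _
      _ ≤ ∑ ρ ∈ D, 2⁻¹ ^ L := Finset.sum_le_sum fun ρ hρ => (hsparse ρ).trans_eq <| by
          rw [measureReal_cylinder, (mem_levelStrings.1 hρ).1]
      _ = μCantor.real (openOf (D : Set (List Bool))) := by
          rw [measureReal_openOf_levelStrings, Finset.sum_const, nsmul_eq_mul]
      _ ≤ μCantor.real U :=
          measureReal_mono (openOf_levelStrings_subset.trans (openOf_cylinder_subset hU).subset)
  have hlim := tendsto_measureReal_iUnion_atTop (μ := μCantor) (W := fun L =>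
    Q ∩ openOf (levelStrings {σ | cylinder σ ⊆ U} L)) fun L L' hL =>
      Set.inter_subset_inter_right Q (monotone_openOf_levelStrings _ hL)
  rw [← Set.inter_iUnion, iUnion_openOf_levelStrings, openOf_cylinder_subset hU,
    Set.inter_eq_left.2 hQU] at hlim
  exact hlt.not_ge (le_of_tendsto' (hlim.const_mul 2) hlevel)

end Levels

section HaltingStages

variable {c : Code} {n s t : ℕ}

/-- The computation of `c` on input `n` halts within `s` steps, but not within `s - 1` steps. -/
def haltsAt (c : Code) (n s : ℕ) : Bool := (c.evaln s n).isSome && !(c.evaln (s - 1) n).isSome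

@[fun_prop] theorem computable_haltsAt {α : Type*} [Primcodable α] {c : α → Code} {n s : α → ℕ}
    (hc : Computable c) (hn : Computable n) (hs : Computable s) :
    Computable fun a => haltsAt (c a) (n a) (s a) := by
  simp only [haltsAt]
  fun_prop

theorem isSome_evaln_mono (hst : s ≤ t) (h : (c.evaln s n).isSome) : (c.evaln t n).isSome := by
  obtain ⟨y, hy⟩ := Option.isSome_iff_exists.1 h
  exact Option.isSome_iff_exists.2 ⟨y, Code.evaln_mono hst hy⟩

theorem isSome_evaln_of_haltsAt (hs : haltsAt c n s) : (c.evaln s n).isSome :=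
  (Bool.and_eq_true_iff.1 hs).1

theorem eq_of_haltsAt (hs : haltsAt c n s) (ht : haltsAt c n t) : s = t := by
  simp only [haltsAt, Bool.and_eq_true, Bool.not_eq_true', ← Bool.not_eq_true] at hs ht
  have hle : ¬ s ≤ t - 1 := fun h => ht.2 (isSome_evaln_mono h hs.1)
  have hge : ¬ t ≤ s - 1 := fun h => hs.2 (isSome_evaln_mono h ht.1)
  omega

theorem exists_haltsAt_iff : (∃ s, haltsAt c n s) ↔ (c.eval n).Dom := by
  refine ⟨fun ⟨s, hs⟩ => (eval_dom_iff c n).2 ⟨s, isSome_evaln_of_haltsAt hs⟩, fun h => ?_⟩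
  have hex := (eval_dom_iff c n).1 h
  have hpos : 0 < Nat.find hex := (Nat.find_pos hex).2 (by simp [Code.evaln])
  refine ⟨Nat.find hex, Bool.and_eq_true_iff.2 ⟨Nat.find_spec hex, ?_⟩⟩
  simpa using Nat.find_min hex (Nat.sub_lt hpos one_pos)

end HaltingStages

/-! ### The Kraft–Chaitin theorem -/

section KraftChaitin

theorem exists_prefixFreeMachine {P : List Bool → ℕ → Prop}
    (hP : ComputablePred fun q : List Bool × ℕ => P q.1 q.2) {x : ℕ → ℕ} (hx : Computable x)
    (hprefix : ∀ {σ τ i j}, P σ i → P τ j → σ <+: τ → i = j ∧ σ = τ) :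
    ∃ e, PrefixFreeMachine e ∧
      ∀ σ i, P σ i → x i ∈ (Denumerable.ofNat Code e).eval (Encodable.encode σ) := by
  classical
  let find (σ : List Bool) : Part ℕ := Nat.rfind fun i => Part.some (decide (P σ i))
  have hfind : Partrec fun σ => (find σ).map x :=
    .map (.rfind (p := fun σ i => Part.some (decide (P σ i))) hP.decide.partrec.to₂)
      (by change Computable fun p : List Bool × ℕ => x p.2; fun_prop)
  obtain ⟨M, hM⟩ := Code.exists_code.1 hfind
  have heval (σ : List Bool) : M.eval (Encodable.encode σ) = (find σ).map x := by
    rw [hM]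
    simp only [Encodable.encodek, Part.coe_some, Part.bind_some]
    exact Part.map_id' (fun _ => rfl) _
  refine ⟨Encodable.encode M, fun σ hσ τ hτ hστ => ?_, fun σ i hi => ?_⟩
  · have hdom {ρ : List Bool} (hρ : ρ ∈ machineDom (Encodable.encode M)) : ∃ i, P ρ i := by
      simp only [machineDom, Set.mem_ofPred_eq, Denumerable.ofNat_encode, heval] at hρ
      obtain ⟨i, hi, -⟩ := Nat.rfind_dom.1 hρ
      exact ⟨i, by simpa using hi⟩
    obtain ⟨i, hi⟩ := hdom hσ
    obtain ⟨j, hj⟩ := hdom hτ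
    exact (hprefix hi hj hστ).2
  · rw [Denumerable.ofNat_encode, heval]
    refine Part.mem_map _ (Nat.mem_rfind.2 ⟨by simpa using hi, fun {j} hj => ?_⟩)
    rw [Part.mem_some_iff, eq_comm, decide_eq_false_iff_not]
    exact fun hPj => hj.ne (hprefix hPj hi (List.prefix_refl σ)).1

variable (req : ℕ → Bool) (w : ℕ → ℕ)

/-- The total weight `∑ 2⁻ʷ` of the active requests before the `i`-th one. -/
noncomputable def partialWeight (i : ℕ) : ℝ := ∑ j ∈ Finset.range i with req j, 2⁻¹ ^ w j

/-- The string `σ` is granted to request `i`: its length is one more than requested, and its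
dyadic interval starts in the left half of `[partialWeight i, partialWeight (i + 1))`. -/
def IsGranted (σ : List Bool) (i : ℕ) : Prop :=
  req i ∧ σ.length = w i + 1 ∧ (binaryValue σ / 2 ^ σ.length : ℝ) ∈
    Set.Ico (partialWeight req w i) (partialWeight req w i + 2⁻¹ ^ σ.length)

variable {req w}

theorem partialWeight_succ (i : ℕ) :
    partialWeight req w (i + 1) = partialWeight req w i + if req i then 2⁻¹ ^ w i else 0 := by
  simp only [partialWeight, Finset.sum_filter, Finset.sum_range_succ]

theorem monotone_partialWeight : Monotone (partialWeight req w) := fun i j hij =>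
  Finset.sum_le_sum_of_subset_of_nonneg (by gcongr) fun _ _ _ => by positivity

theorem partialWeight_nonneg (i : ℕ) : 0 ≤ partialWeight req w i :=
  Finset.sum_nonneg fun _ _ => by positivity

theorem exists_computable_partialWeight_eq (hreq : Computable req) (hw : Computable w) :
    ∃ F : ℕ → ℕ × ℕ, Computable F ∧ ∀ i, partialWeight req w i = (F i).1 / 2 ^ (F i).2 := by
  let add (i : ℕ) (p : ℕ × ℕ) : ℕ × ℕ :=
    bif req i then (p.1 * 2 ^ w i + 2 ^ p.2, p.2 + w i) else p
  have hadd : Computable fun r : ℕ × ℕ × ℕ × ℕ => add r.2.1 r.2.2 := by fun_prop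
  refine ⟨fun i => Nat.rec (0, 0) add i,
    .nat_rec (h := fun _ q => add q.1 q.2) .id (.const _) hadd, fun i => ?_⟩
  induction i with
  | zero => simp [partialWeight]
  | succ i ih =>
    rw [partialWeight_succ, ih]
    cases h : req i
    · simp [add, h]
    · simp only [add, h, cond_true, if_true]
      push_cast
      rw [pow_add, inv_pow]
      field_simp

theorem computablePred_isGranted (hreq : Computable req) (hw : Computable w) :
    ComputablePred fun q : List Bool × ℕ => IsGranted req w q.1 q.2 := by
  obtain ⟨F, hF, hweight⟩ := exists_computable_partialWeight_eq hreq hw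
  have hleft : Computable fun q : List Bool × ℕ =>
      decide ((F q.2).1 * 2 ^ q.1.length ≤ binaryValue q.1 * 2 ^ (F q.2).2) :=
    computable_decide_le (by fun_prop) (by fun_prop)
  have hright : Computable fun q : List Bool × ℕ => decide (binaryValue q.1 * 2 ^ (F q.2).2 <
      (F q.2).1 * 2 ^ q.1.length + 2 ^ (F q.2).2) :=
    computable_decide_lt (by fun_prop) (by fun_prop)
  have hlength : Computable fun q : List Bool × ℕ => decide (q.1.length = w q.2 + 1) := by fun_prop
  refine ComputablePred.computable_iff.2 ⟨_, computable_and (hreq.comp .snd)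
    (computable_and hlength (computable_and hleft hright)), funext fun q => propext ?_⟩
  simp only [Bool.and_eq_true, decide_eq_true_eq, IsGranted, Set.mem_Ico, hweight]
  refine and_congr_right' (and_congr_right' (and_congr ?_ ?_))
  · rw [div_le_div_iff₀ (by positivity) (by positivity)]
    exact_mod_cast Iff.rfl
  · rw [inv_pow, inv_eq_one_div, div_add_div _ _ (by positivity) (by positivity), mul_one,
      div_lt_div_iff₀ (by positivity) (by positivity), ← mul_assoc,
      mul_lt_mul_iff_left₀ (by positivity)]
    exact_mod_cast Iff.rfl

theorem IsGranted.dyadicInterval_subset {σ : List Bool} {i : ℕ} (h : IsGranted req w σ i) :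
    dyadicInterval σ ⊆ Set.Ico (partialWeight req w i) (partialWeight req w (i + 1)) := by
  obtain ⟨hi, hlen, hleft, hright⟩ := h
  refine Set.Ico_subset_Ico hleft ?_
  have hweight : (2⁻¹ : ℝ) ^ w i = 2⁻¹ ^ σ.length + 2⁻¹ ^ σ.length := by rw [hlen, pow_succ]; ring
  rw [partialWeight_succ, if_pos hi, hweight, add_div, one_div, ← inv_pow]
  linarith

theorem IsGranted.eq_of_prefix {σ τ : List Bool} {i j : ℕ} (hσ : IsGranted req w σ i)
    (hτ : IsGranted req w τ j) (h : σ <+: τ) : i = j ∧ σ = τ := by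
  obtain ⟨x, hxτ⟩ : (dyadicInterval τ).Nonempty := by
    rw [dyadicInterval, Set.nonempty_Ico]
    gcongr
    exact lt_add_one _
  have hxσ : x ∈ dyadicInterval σ := by
    rw [mem_dyadicInterval_iff] at hxτ ⊢
    exact ⟨hxτ.1, cylinder_subset_cylinder h hxτ.2⟩
  have hij : i = j := by
    by_contra hne
    exact (monotone_partialWeight.pairwise_disjoint_on_Ico_succ hne).le_bot
      ⟨hσ.dyadicInterval_subset hxσ, hτ.dyadicInterval_subset hxτ⟩
  subst hij
  exact ⟨rfl, h.eq_of_length (hσ.2.1.trans hτ.2.1.symm)⟩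

theorem exists_isGranted {i : ℕ} (hi : req i) (hle : partialWeight req w (i + 1) ≤ 1) :
    ∃ σ, IsGranted req w σ i := by
  set l := w i + 1 with hl
  set v := ⌈partialWeight req w i * 2 ^ l⌉₊
  have hpos : (0 : ℝ) < 2 ^ l := by positivity
  have hv : (v : ℝ) < partialWeight req w i * 2 ^ l + 1 :=
    Nat.ceil_lt_add_one (mul_nonneg (partialWeight_nonneg i) hpos.le)
  have hx : (v / 2 ^ l : ℝ) ∈ Set.Ico (0 : ℝ) 1 := by
    refine ⟨by positivity, (div_lt_one hpos).2 ?_⟩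
    rw [partialWeight_succ, if_pos hi] at hle
    have hweight : (2⁻¹ : ℝ) ^ w i * 2 ^ l = 2 := by
      rw [hl, pow_succ, ← mul_assoc, ← mul_pow]
      norm_num
    nlinarith
  obtain ⟨σ, hlen, hσ⟩ : ∃ σ : List Bool, σ.length = l ∧ binaryValue σ = v := by
    refine ⟨strPrefix (binaryDigits (v / 2 ^ l)) l, length_strPrefix _ _, ?_⟩
    have := (isPrefixOf_binaryDigits_iff_floor hx _).1 (isPrefixOf_strPrefix l)
    rw [length_strPrefix, div_mul_cancel₀ _ hpos.ne', Int.floor_natCast] at this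
    exact_mod_cast this.symm
  refine ⟨σ, hi, hlen, ?_⟩
  rw [hlen, hσ]
  refine ⟨(le_div_iff₀ hpos).2 (Nat.le_ceil _), (div_lt_iff₀ hpos).2 ?_⟩
  rwa [add_mul, ← mul_pow, inv_mul_cancel₀ two_ne_zero, one_pow]

theorem exists_machine_of_requests {x : ℕ → ℕ} (hreq : Computable req) (hw : Computable w)
    (hx : Computable x) (hle : ∀ i, partialWeight req w i ≤ 1) :
    ∃ e, PrefixFreeMachine e ∧ ∀ i, req i → ∃ σ : List Bool, σ.length = w i + 1 ∧
      x i ∈ (Denumerable.ofNat Code e).eval (Encodable.encode σ) := by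
  obtain ⟨e, he, heval⟩ := exists_prefixFreeMachine (computablePred_isGranted hreq hw) hx
    IsGranted.eq_of_prefix
  refine ⟨e, he, fun i hi => ?_⟩
  obtain ⟨σ, hσ⟩ := exists_isGranted hi (hle (i + 1))
  exact ⟨σ, hσ.2.1, heval σ i hσ⟩

theorem exists_enumeration_without_repetition {S : ℕ → Prop} (hS : REPred S) :
    ∃ req : ℕ → Bool, Computable req ∧ (∀ n, S n ↔ ∃ s, req (Nat.pair n s)) ∧
      ∀ i j, req i → req j → i.unpair.1 = j.unpair.1 → i = j := by
  obtain ⟨c, hc⟩ := exists_code_dom_iff hS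
  refine ⟨fun i => haltsAt c i.unpair.1 i.unpair.2, by fun_prop, fun n => ?_,
    fun i j hi hj hij => ?_⟩
  · simp only [Nat.unpair_pair]
    exact (hc n).symm.trans exists_haltsAt_iff.symm
  · simp only [hij] at hi
    rw [← Nat.pair_unpair i, ← Nat.pair_unpair j, hij, eq_of_haltsAt hi hj]

theorem partialWeight_unpair_le {S : ℕ → Prop} {k : ℕ → ℕ} {d : ℕ}
    (hsum : Summable ({n | S n}.indicator fun n => (2⁻¹ : ℝ) ^ k n))
    (hS : ∀ i, req i → S i.unpair.1)
    (hinj : ∀ i j, req i → req j → i.unpair.1 = j.unpair.1 → i = j) (i : ℕ) :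
    partialWeight req (fun i => k i.unpair.1 + d) i ≤
      (∑' n, {n | S n}.indicator (fun n => (2⁻¹ : ℝ) ^ k n) n) * 2⁻¹ ^ d := by
  classical
  set F := {j ∈ Finset.range i | req j}
  have hmem {j : ℕ} (hj : j ∈ F) : req j := (Finset.mem_filter.1 hj).2
  calc partialWeight req (fun i => k i.unpair.1 + d) i
      = (∑ j ∈ F, {n | S n}.indicator (fun n => (2⁻¹ : ℝ) ^ k n) j.unpair.1) * 2⁻¹ ^ d := by
        rw [partialWeight, Finset.sum_mul]
        refine Finset.sum_congr rfl fun j hj => ?_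
        rw [Set.indicator_of_mem (Set.mem_ofPred_eq ▸ hS j (hmem hj)), pow_add]
    _ = (∑ n ∈ F.image fun j => j.unpair.1, {n | S n}.indicator (fun n => (2⁻¹ : ℝ) ^ k n) n) *
          2⁻¹ ^ d := by
        rw [Finset.sum_image fun a ha b hb => hinj a b (hmem ha) (hmem hb)]
    _ ≤ _ := by
        gcongr
        exact hsum.sum_le_tsum _ fun n _ => Set.indicator_nonneg (fun _ _ => by positivity) n

theorem exists_kraftChaitin_machine {S : ℕ → Prop} (hS : REPred S) {k x : ℕ → ℕ} (hk : Computable k)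
    (hx : Computable x) (hsum : Summable ({n | S n}.indicator fun n => (2⁻¹ : ℝ) ^ k n)) :
    ∃ e c, PrefixFreeMachine e ∧ ∀ n, S n → ∃ σ : List Bool, σ.length = k n + c ∧
      x n ∈ (Denumerable.ofNat Code e).eval (Encodable.encode σ) := by
  obtain ⟨req, hreq, hS, hinj⟩ := exists_enumeration_without_repetition hS
  obtain ⟨d, hd⟩ := pow_unbounded_of_one_lt (∑' n, {n | S n}.indicator (fun n => (2⁻¹ : ℝ) ^ k n) n)
    one_lt_two
  have hle (i : ℕ) : partialWeight req (fun i => k i.unpair.1 + d) i ≤ 1 := by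
    have hreqS (i : ℕ) (hi : req i) : S i.unpair.1 :=
      (hS _).2 ⟨i.unpair.2, by rwa [Nat.pair_unpair]⟩
    refine (partialWeight_unpair_le hsum hreqS hinj i).trans ?_
    rw [inv_pow, ← div_eq_mul_inv]
    exact (div_le_one (by positivity)).2 hd.le
  obtain ⟨e, he, hmachine⟩ := exists_machine_of_requests (x := fun i => x i.unpair.1) hreq
    (w := fun i => k i.unpair.1 + d) (by fun_prop) (by fun_prop) hle
  refine ⟨e, d + 1, he, fun n hn => ?_⟩
  obtain ⟨s, hs⟩ := (hS n).1 hn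
  simpa [add_assoc] using hmachine _ hs

end KraftChaitin

section Complexity

theorem Kcpx_le {e x : ℕ} {σ : List Bool} (he : PrefixFreeMachine e)
    (hx : x ∈ (Denumerable.ofNat Code e).eval (Encodable.encode σ)) :
    Kcpx x ≤ σ.length + 2 * e + 2 :=
  Nat.sInf_le ⟨e, σ, he, hx, rfl⟩

theorem exists_Kcpx_eq (x : ℕ) : ∃ (e : ℕ) (σ : List Bool), PrefixFreeMachine e ∧
    x ∈ (Denumerable.ofNat Code e).eval (Encodable.encode σ) ∧ Kcpx x = σ.length + 2 * e + 2 := by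
  refine Nat.sInf_mem (s := {k | ∃ e, ∃ σ : List Bool, PrefixFreeMachine e ∧
    x ∈ (Denumerable.ofNat Code e).eval (Encodable.encode σ) ∧ k = σ.length + 2 * e + 2}) ?_
  have hP : ComputablePred fun q : List Bool × ℕ => q.1 = [] ∧ q.2 = 0 :=
    ComputablePred.computable_iff.2 ⟨fun q => decide (q.1 = []) && decide (q.2 = 0),
      by fun_prop, funext fun q => by simp⟩
  obtain ⟨e, he, hx⟩ := exists_prefixFreeMachine (P := fun σ i => σ = [] ∧ i = 0) hP
    (Computable.const x) (by simp_all)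
  exact ⟨_, e, [], he, hx [] 0 ⟨rfl, rfl⟩, rfl⟩

end Complexity

/-! ### Descriptions of initial segments -/

section Descriptions

variable {A : ℕ → Bool} {e s n : ℕ} {σ : List Bool}

/-- At stage `s`, and not before, machine `e` is seen to describe `1ⁿ` by the program `σ`, while it
has halted on no other program comparable with `σ`. The last clause makes the programs of `e` an
antichain without deciding whether `e` is prefix-free. -/
def DescribesAt (e : ℕ) (σ : List Bool) (s n : ℕ) : Prop :=
  haltsAt (Denumerable.ofNat Code e) (Encodable.encode σ) s ∧
  (Denumerable.ofNat Code e).evaln s (Encodable.encode σ) =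
    some (Encodable.encode (List.replicate n true)) ∧
  ∀ τ : List Bool, (σ <+: τ ∨ τ <+: σ) →
    ((Denumerable.ofNat Code e).evaln s (Encodable.encode τ)).isSome → τ = σ

theorem computable_replicate (b : Bool) : Computable fun n => List.replicate n b := by
  have h : Computable fun n => (List.range n).map fun _ => b :=
    (Primrec.list_map Primrec.list_range (Primrec₂.const b)).to_comp
  exact h.of_eq fun n => by simp

theorem computablePred_describesAt : ComputablePred fun q : ℕ × List Bool × ℕ × ℕ =>
    DescribesAt q.1 q.2.1 q.2.2.1 q.2.2.2 := by
  have hreplicate : Computable fun q : ℕ × List Bool × ℕ × ℕ => List.replicate q.2.2.2 true :=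
    (computable_replicate true).comp (by fun_prop)
  let halted (q : ℕ × List Bool × ℕ × ℕ) (τ : List Bool) : Bool :=
    ((Denumerable.ofNat Code q.1).evaln q.2.2.1 (Encodable.encode τ)).isSome
  let antichain (q : ℕ × List Bool × ℕ × ℕ) (τ : List Bool) : Bool :=
    !((q.2.1.isPrefixOf τ || τ.isPrefixOf q.2.1) && halted q τ) || decide (τ = q.2.1)
  have hantichain : Computable fun q : ℕ × List Bool × ℕ × ℕ =>
      (List.range q.2.2.1).all fun y => antichain q ((Encodable.decode y).getD q.2.1) :=
    computable_all_range (by fun_prop) (by fun_prop)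
  have hmachine : Computable fun q : ℕ × List Bool × ℕ × ℕ =>
      haltsAt (Denumerable.ofNat Code q.1) (Encodable.encode q.2.1) q.2.2.1 &&
      decide ((Denumerable.ofNat Code q.1).evaln q.2.2.1 (Encodable.encode q.2.1) =
        some (Encodable.encode (List.replicate q.2.2.2 true))) := by
    fun_prop
  refine ComputablePred.computable_iff.2 ⟨_, computable_and hmachine hantichain,
    funext fun ⟨e, σ, s, n⟩ => propext ?_⟩
  simp only [DescribesAt, Bool.and_eq_true, decide_eq_true_eq, and_assoc, List.all_eq_true,
    List.mem_range]
  refine and_congr_right' (and_congr_right' ⟨fun h y _ => ?_, fun h τ hτ hhalt => ?_⟩)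
  · have := h ((Encodable.decode y).getD σ)
    simp only [antichain, halted, ← List.isPrefixOf_iff_prefix] at this ⊢
    grind
  · obtain ⟨y, hy⟩ := Option.isSome_iff_exists.1 hhalt
    have := h _ (Code.evaln_bound hy)
    simp only [antichain, halted, Encodable.encodek, Option.getD_some,
      ← List.isPrefixOf_iff_prefix] at this hτ
    grind

theorem exists_describesAt (he : PrefixFreeMachine e)
    (hσ : Encodable.encode (List.replicate n true) ∈
      (Denumerable.ofNat Code e).eval (Encodable.encode σ)) : ∃ s, DescribesAt e σ s n := by
  have hdom {τ : List Bool} {y s : ℕ}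
      (h : y ∈ (Denumerable.ofNat Code e).evaln s (Encodable.encode τ)) : τ ∈ machineDom e :=
    Part.dom_iff_mem.2 ⟨y, Code.evaln_sound h⟩
  obtain ⟨s, hs⟩ := exists_haltsAt_iff.2 (Part.dom_iff_mem.2 ⟨_, hσ⟩)
  obtain ⟨x, hx⟩ := Option.isSome_iff_exists.1 (isSome_evaln_of_haltsAt hs)
  refine ⟨s, hs, Part.mem_unique (Code.evaln_sound hx) hσ ▸ hx, fun τ hτ hhalt => ?_⟩
  obtain ⟨y, hy⟩ := Option.isSome_iff_exists.1 hhalt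
  exact hτ.elim (fun h => (he σ (hdom hx) τ (hdom hy) h).symm)
    (fun h => he τ (hdom hy) σ (hdom hx) h)

theorem DescribesAt.eq_of_prefix {τ : List Bool} {t m : ℕ} (hσ : DescribesAt e σ s n)
    (hτ : DescribesAt e τ t m) (h : σ <+: τ) : σ = τ ∧ s = t ∧ n = m := by
  have hστ : σ = τ := by
    rcases le_total s t with hst | hts
    · exact hτ.2.2 σ (.inr h) (isSome_evaln_mono hst (isSome_evaln_of_haltsAt hσ.1))
    · exact (hσ.2.2 τ (.inl h) (isSome_evaln_mono hts (isSome_evaln_of_haltsAt hτ.1))).symm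
  subst hστ
  obtain rfl := eq_of_haltsAt hσ.1 hτ.1
  have hout := Encodable.encode_injective (Option.some_injective _ (hσ.2.1.symm.trans hτ.2.1))
  exact ⟨rfl, rfl, by simpa using congrArg List.length hout⟩

/-- A tuple `(e, σ, s, x, i)` recording that the program `σ` of machine `e`, halting at stage `s`,
describes `1ⁿ` for `n = |x|`; the string `x` is a guess for `A ↾ n`, and `i` is a colour. -/
abbrev Description := ℕ × List Bool × ℕ × List Bool × Bool

/-- The description is correct, and its guess is an initial segment of `A`. -/
def Describes (A : ℕ → Bool) : Description → Prop
  | (e, σ, s, x, _) => DescribesAt e σ s x.length ∧ IsPrefixOf x A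

/-- A code for a description, with the property that correct descriptions have incomparable codes
and that no code is longer than the cost `|σ| + 2e + 2` charged to the description by `Kcpx`. -/
def descriptionCode : Description → List Bool
  | (e, σ, _, _, i) => List.replicate e true ++ false :: i :: σ

theorem length_descriptionCode (d : Description) :
    (descriptionCode d).length = d.1 + d.2.1.length + 2 := by
  obtain ⟨e, σ, s, x, i⟩ := d
  simp only [descriptionCode, List.length_append, List.length_replicate, List.length_cons]
  ring

theorem eq_and_prefix_of_replicate_append {e' : ℕ} {τ : List Bool}
    (h : List.replicate e true ++ false :: σ <+: List.replicate e' true ++ false :: τ) :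
    e = e' ∧ σ <+: τ := by
  induction e generalizing e' with
  | zero => cases e' <;> simp_all [List.replicate_succ]
  | succ e ih =>
    cases e' with
    | zero => simp [List.replicate_succ] at h
    | succ e' => simpa using ih (by simpa [List.replicate_succ] using h)

theorem Describes.eq_of_code_prefix {d d' : Description} (hd : Describes A d)
    (hd' : Describes A d') (h : descriptionCode d <+: descriptionCode d') : d = d' := by
  obtain ⟨e, σ, s, x, i⟩ := d
  obtain ⟨e', σ', s', x', i'⟩ := d'
  obtain ⟨rfl, hprefix⟩ := eq_and_prefix_of_replicate_append h
  obtain ⟨rfl, hσ⟩ := List.cons_prefix_cons.1 hprefix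
  obtain ⟨rfl, rfl, hlen⟩ := hd.1.eq_of_prefix hd'.1 hσ
  obtain rfl : x = x' := by
    rw [← isPrefixOf_iff_strPrefix_eq.1 hd.2, ← isPrefixOf_iff_strPrefix_eq.1 hd'.2, hlen]
  rfl

end Descriptions

section BoundedSet

/-- The numbers in `B` carry weights `2⁻ᵏ` with finite sum and one of two colours, but no c.e.
superset of either colour class has finite weight. -/
structure IsCoverless (A B : ℕ → Bool) (k : ℕ → ℕ) (colour : ℕ → Bool) : Prop where
  computable_exponent : Computable k
  computable_colour : Computable colour
  turingLE : TuringLE B A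
  summable : Summable ({n | B n = true}.indicator fun n => (2⁻¹ : ℝ) ^ k n)
  not_summable {S : ℕ → Prop} {i : Bool} (hS : REPred S)
    (hBS : ∀ n, B n = true → colour n = i → S n) :
    ¬ Summable ({n | S n}.indicator fun n => (2⁻¹ : ℝ) ^ k n)

/-- The description encoded by a number, with an arbitrary value off the range of the encoding. -/
def decodeDescription (n : ℕ) : Description := (Encodable.decode n).getD (0, [], 0, [], false)

@[fun_prop] theorem computable_decodeDescription {α : Type*} [Primcodable α] {f : α → ℕ}
    (hf : Computable f) : Computable fun a => decodeDescription (f a) := by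
  simp only [decodeDescription]
  fun_prop

open Classical in
/-- The set of codes of correct descriptions of initial segments of `A`. -/
noncomputable def descriptionSet (A : ℕ → Bool) (n : ℕ) : Bool :=
  decide (Encodable.encode (decodeDescription n) = n ∧ Describes A (decodeDescription n))

/-- The exponent `k` of the weight `2⁻ᵏ` of an encoded description. -/
def descriptionCost (n : ℕ) : ℕ :=
  (decodeDescription n).2.1.length + 2 * (decodeDescription n).1 + 2

variable {A : ℕ → Bool}

theorem decodeDescription_encode (d : Description) :
    decodeDescription (Encodable.encode d) = d := by
  simp [decodeDescription]

theorem descriptionSet_encode {d : Description} :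
    descriptionSet A (Encodable.encode d) = true ↔ Describes A d := by
  simp [descriptionSet, decodeDescription_encode]

theorem computable_descriptionCost : Computable descriptionCost := by
  change Computable fun n => (decodeDescription n).2.1.length + 2 * (decodeDescription n).1 + 2
  fun_prop

theorem descriptionSet_turingLE : TuringLE (descriptionSet A) A := by
  obtain ⟨f, hf, hfD⟩ := ComputablePred.computable_iff.1 computablePred_describesAt
  have hiff (d : Description) : Describes A d ↔
      f (d.1, d.2.1, d.2.2.1, d.2.2.2.1.length) = true ∧ IsPrefixOf d.2.2.2.1 A :=
    and_congr_left' (iff_of_eq (congrFun hfD (d.1, d.2.1, d.2.2.1, d.2.2.2.1.length)))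
  refine turingLE_of_sigmaOneIn ?_ ?_
  · have h : SigmaOneIn (fun n => Encodable.encode (decodeDescription n) = n ∧
        f ((decodeDescription n).1, (decodeDescription n).2.1, (decodeDescription n).2.2.1,
          (decodeDescription n).2.2.2.1.length) = true ∧
        IsPrefixOf (decodeDescription n).2.2.2.1 A) A := by
      fun_prop
    exact h.of_iff fun n => by simp only [descriptionSet, hiff, decide_eq_true_eq]
  · have h : SigmaOneIn (fun n => Encodable.encode (decodeDescription n) ≠ n ∨
        f ((decodeDescription n).1, (decodeDescription n).2.1, (decodeDescription n).2.2.1,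
          (decodeDescription n).2.2.2.1.length) = false ∨
        ∃ x, strPrefix A (decodeDescription n).2.2.2.1.length = x ∧
          x ≠ (decodeDescription n).2.2.2.1) A := by
      fun_prop
    refine h.of_iff fun n => ?_
    simp only [descriptionSet, hiff, isPrefixOf_iff_strPrefix_eq, decide_eq_false_iff_not,
      not_and_or, Bool.not_eq_true, exists_eq_left', ne_eq]

theorem summable_descriptionSet : Summable
    ({n | descriptionSet A n = true}.indicator fun n => (2⁻¹ : ℝ) ^ descriptionCost n) := by
  classical
  refine summable_of_sum_le (c := 1)
    (fun n => Set.indicator_nonneg (fun _ _ => by positivity) n) fun F => ?_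
  rw [Finset.sum_indicator_eq_sum_filter]
  set G := {n ∈ F | n ∈ {n | descriptionSet A n = true}}
  have hG {n : ℕ} (hn : n ∈ G) :
      Encodable.encode (decodeDescription n) = n ∧ Describes A (decodeDescription n) :=
    of_decide_eq_true (Finset.mem_filter.1 hn).2
  calc ∑ n ∈ G, (2⁻¹ : ℝ) ^ descriptionCost n
      ≤ ∑ n ∈ G, (2⁻¹ : ℝ) ^ (descriptionCode (decodeDescription n)).length := by
        refine Finset.sum_le_sum fun n _ => pow_le_pow_of_le_one (by norm_num) (by norm_num) ?_
        rw [length_descriptionCode, descriptionCost]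
        omega
    _ ≤ 1 := sum_inv_two_pow_length_le_one fun n hn m hm hne hprefix => hne <| by
        rw [← (hG hn).1, ← (hG hm).1, (hG hn).2.eq_of_code_prefix (hG hm).2 hprefix]

theorem not_summable_of_descriptionSet_subset (hA : ¬ KTrivial A) {S : ℕ → Prop} {i : Bool}
    (hS : REPred S)
    (hAS : ∀ n, descriptionSet A n = true → (decodeDescription n).2.2.2.2 = i → S n) :
    ¬ Summable ({n | S n}.indicator fun n => (2⁻¹ : ℝ) ^ descriptionCost n) := by
  intro hsum
  obtain ⟨e', c, he', hmachine⟩ := exists_kraftChaitin_machine hS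
    (x := fun n => Encodable.encode (decodeDescription n).2.2.2.1)
    computable_descriptionCost (by fun_prop) hsum
  refine hA ⟨c + 2 * e' + 2, fun n => ?_⟩
  obtain ⟨e, σ, he, hσ, hK⟩ := exists_Kcpx_eq (Encodable.encode (List.replicate n true))
  obtain ⟨s, hs⟩ := exists_describesAt he hσ
  let d : Description := (e, σ, s, strPrefix A n, i)
  have hd : Describes A d := ⟨by rwa [length_strPrefix], isPrefixOf_strPrefix n⟩
  obtain ⟨σ', hlen, hσ'⟩ := hmachine (Encodable.encode d)
    (hAS _ (descriptionSet_encode.2 hd) (by rw [decodeDescription_encode]))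
  rw [decodeDescription_encode] at hσ'
  calc Kcpx (Encodable.encode (strPrefix A n)) ≤ σ'.length + 2 * e' + 2 := Kcpx_le he' hσ'
    _ = KofNat n + (c + 2 * e' + 2) := by
      rw [hlen, descriptionCost, decodeDescription_encode, KofNat, hK]
      ring

theorem exists_isCoverless (hA : ¬ KTrivial A) : ∃ B k colour, IsCoverless A B k colour :=
  ⟨descriptionSet A, descriptionCost, fun n => (decodeDescription n).2.2.2.2,
    { computable_exponent := computable_descriptionCost
      computable_colour := by fun_prop
      turingLE := descriptionSet_turingLE
      summable := summable_descriptionSet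
      not_summable := not_summable_of_descriptionSet_subset hA }⟩

end BoundedSet

/-! ### The second moment argument -/

section SecondMoment

open ProbabilityTheory

variable {Ω ι : Type*} [MeasurableSpace Ω] {μ : Measure Ω}

theorem indepFun_indicator_one {S T : Set Ω} (h : IndepSet S T μ) :
    S.indicator (1 : Ω → ℝ) ⟂ᵢ[μ] T.indicator (1 : Ω → ℝ) := by
  have comap_le (S : Set Ω) : MeasurableSpace.comap (S.indicator (1 : Ω → ℝ)) inferInstance ≤
      MeasurableSpace.generateFrom {S} := by
    refine Measurable.comap_le ?_
    let _ := MeasurableSpace.generateFrom {S}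
    exact measurable_one.indicator (MeasurableSpace.measurableSet_generateFrom rfl)
  exact indep_of_indep_of_le_left (indep_of_indep_of_le_right h (comap_le T)) (comap_le S)

theorem memLp_indicator_one [IsFiniteMeasure μ] {S : Set Ω} (hS : MeasurableSet S) (p : ℝ≥0∞) :
    MemLp (S.indicator (1 : Ω → ℝ)) p μ :=
  memLp_indicator_const p hS 1 (Or.inr (measure_ne_top μ S))

theorem variance_sum_indicator_le [IsProbabilityMeasure μ] {F : Finset ι} {V : ι → Set Ω}
    (hV : ∀ n ∈ F, MeasurableSet (V n))
    (hind : (F : Set ι).Pairwise fun i j => IndepSet (V i) (V j) μ) :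
    Var[∑ n ∈ F, (V n).indicator 1; μ] ≤ ∑ n ∈ F, μ.real (V n) := by
  rw [IndepFun.variance_sum (fun n hn => memLp_indicator_one (hV n hn) 2)
    fun i hi j hj hij => indepFun_indicator_one (hind hi hj hij)]
  refine Finset.sum_le_sum fun n hn => ?_
  have sq_indicator : ((V n).indicator 1 : Ω → ℝ) ^ 2 = (V n).indicator 1 := by
    ext x
    by_cases hx : x ∈ V n <;> simp [hx]
  calc Var[(V n).indicator 1; μ] ≤ ∫ x, (((V n).indicator 1 : Ω → ℝ) ^ 2) x ∂μ :=
        variance_le_expectation_sq (memLp_indicator_one (hV n hn) 2).aestronglyMeasurable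
    _ = μ.real (V n) := by rw [sq_indicator, integral_indicator_one (hV n hn)]

/-- Chebyshev's argument: on `Q` the count `X` of the events satisfies
`w ^ 2 - 2 * w * X ≤ (X - w) ^ 2`, and the integral of the right-hand side is at most the
variance of `X`. -/
theorem sq_sum_mul_measureReal_le [IsProbabilityMeasure μ] {F : Finset ι} {V : ι → Set Ω}
    (hV : ∀ n ∈ F, MeasurableSet (V n))
    (hind : (F : Set ι).Pairwise fun i j => IndepSet (V i) (V j) μ)
    (Q : Set Ω) {w : ℝ} (hw : ∑ n ∈ F, μ.real (V n) = w) :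
    w ^ 2 * μ.real Q ≤ w + 2 * w * ∑ n ∈ F, μ.real (Q ∩ V n) := by
  set X : Ω → ℝ := ∑ n ∈ F, (V n).indicator 1 with hX
  have hXL : MemLp X 2 μ := memLp_finsetSum' _ fun n hn => memLp_indicator_one (hV n hn) 2
  have hXint : Integrable X μ := hXL.integrable one_le_two
  have integrable_indicator {n} (hn : n ∈ F) : Integrable ((V n).indicator (1 : Ω → ℝ)) μ :=
    (memLp_indicator_one (hV n hn) 1).integrable le_rfl
  have expectation : ∫ x, X x ∂μ = w := by
    simp only [hX, Finset.sum_apply]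
    rw [integral_finsetSum _ fun n hn => integrable_indicator hn, ← hw]
    exact Finset.sum_congr rfl fun n hn => integral_indicator_one (hV n hn)
  have expectation_on : ∫ x in Q, X x ∂μ = ∑ n ∈ F, μ.real (Q ∩ V n) := by
    simp only [hX, Finset.sum_apply]
    rw [integral_finsetSum _ fun n hn => (integrable_indicator hn).integrableOn]
    refine Finset.sum_congr rfl fun n hn => ?_
    rw [integral_indicator_one (hV n hn), measureReal_restrict_apply (hV n hn), Set.inter_comm]
  have hsq : Integrable (fun x => (X x - w) ^ 2) μ := (hXL.sub (memLp_const w)).integrable_sq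
  have hlin : IntegrableOn (fun x => w ^ 2 - 2 * w * X x) Q μ :=
    ((integrable_const _).sub (hXint.const_mul _)).integrableOn
  have chebyshev : w ^ 2 * μ.real Q - 2 * w * ∑ n ∈ F, μ.real (Q ∩ V n) ≤ w :=
    calc w ^ 2 * μ.real Q - 2 * w * ∑ n ∈ F, μ.real (Q ∩ V n)
        = ∫ x in Q, (w ^ 2 - 2 * w * X x) ∂μ := by
          rw [integral_sub (integrable_const _) (hXint.const_mul _).integrableOn,
            integral_const_mul, expectation_on, setIntegral_const, smul_eq_mul, mul_comm]
      _ ≤ ∫ x in Q, (X x - w) ^ 2 ∂μ :=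
          setIntegral_mono hlin hsq.integrableOn fun x => by nlinarith [sq_nonneg (X x)]
      _ ≤ ∫ x, (X x - w) ^ 2 ∂μ :=
          setIntegral_le_integral hsq (Filter.Eventually.of_forall fun x => sq_nonneg _)
      _ = Var[X; μ] := by rw [variance_eq_integral hXL.aemeasurable, expectation]
      _ ≤ w := hw ▸ variance_sum_indicator_le hV hind
  linarith

theorem exists_mul_lt_measureReal_inter [IsProbabilityMeasure μ] {F : Finset ι} {V : ι → Set Ω}
    (hV : ∀ n ∈ F, MeasurableSet (V n))
    (hind : (F : Set ι).Pairwise fun i j => IndepSet (V i) (V j) μ)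
    {Q : Set Ω} {c : ℝ}
    (hc : 1 < (∑ n ∈ F, μ.real (V n)) * (μ.real Q - 2 * c)) :
    ∃ n ∈ F, c * μ.real (V n) < μ.real (Q ∩ V n) := by
  by_contra! h
  set w := ∑ n ∈ F, μ.real (V n) with hw
  have w_nonneg : 0 ≤ w := Finset.sum_nonneg fun n _ => measureReal_nonneg
  have w_pos : 0 < w := w_nonneg.lt_of_ne fun h0 => by simp [← h0, zero_lt_one.not_gt] at hc
  have sum_le : ∑ n ∈ F, μ.real (Q ∩ V n) ≤ c * w := by
    rw [hw, Finset.mul_sum]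
    exact Finset.sum_le_sum h
  have moment := sq_sum_mul_measureReal_le hV hind Q hw.symm
  nlinarith [mul_le_mul_of_nonneg_left sum_le w_nonneg, mul_lt_mul_of_pos_left hc w_pos]

end SecondMoment

section Blocks

/-- The event that all `k n` bits of the `n`-th column `i ↦ Z ⟨n, i⟩` of `Z` are `true`; these
events are independent, and `R` codes a bit of `X` by entering one of them. -/
def block (k : ℕ → ℕ) (n : ℕ) : Set (ℕ → Bool) := {Z | ∀ i < k n, Z (Nat.pair n i) = true}

/-- The positions inspected by `block k n`. -/
def blockSupport (k : ℕ → ℕ) (n : ℕ) : Finset ℕ := (Finset.range (k n)).image (Nat.pair n)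

variable {k : ℕ → ℕ}

theorem block_eq (k : ℕ → ℕ) (n : ℕ) : block k n = {Z | ∀ i ∈ blockSupport k n, Z i = true} := by
  simp [block, blockSupport]

theorem card_blockSupport (k : ℕ → ℕ) (n : ℕ) : (blockSupport k n).card = k n := by
  rw [blockSupport, Finset.card_image_of_injective _ fun a b h => (Nat.pair_eq_pair.1 h).2,
    Finset.card_range]

theorem disjoint_blockSupport {n n' : ℕ} (h : n ≠ n') :
    Disjoint (blockSupport k n) (blockSupport k n') := by
  simp only [blockSupport, Finset.disjoint_left, Finset.mem_image, Finset.mem_range]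
  rintro _ ⟨i, -, rfl⟩ ⟨i', -, h'⟩
  exact h (Nat.pair_eq_pair.1 h').1.symm

theorem measureReal_block (k : ℕ → ℕ) (n : ℕ) : μCantor.real (block k n) = 2⁻¹ ^ k n := by
  rw [block_eq, measureReal_setOf_forall_mem_eq_true, card_blockSupport]

theorem mem_block_iff_exists_strPrefix {n : ℕ} {Z : ℕ → Bool} :
    Z ∈ block k n ↔ ∃ t, ∀ i < k n, (strPrefix Z t)[Nat.pair n i]? = some true := by
  simp only [block, getElem?_strPrefix, Set.mem_ofPred_eq]
  constructor
  · intro h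
    refine ⟨(blockSupport k n).sup id + 1, fun i hi => ?_⟩
    have : Nat.pair n i ≤ (blockSupport k n).sup id :=
      Finset.le_sup (f := id) (Finset.mem_image_of_mem _ (Finset.mem_range.2 hi))
    rw [if_pos (Nat.lt_succ_of_le this), h i hi]
  · rintro ⟨t, ht⟩ i hi
    exact Option.some.inj (Option.ite_none_right_eq_some.1 (ht i hi)).2

theorem isClopen_block (k : ℕ → ℕ) (n : ℕ) : IsClopen (block k n) := by
  have : block k n = ⋂ i ∈ blockSupport k n, {Z : ℕ → Bool | Z i = true} := by
    ext Z
    simp [block_eq]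
  rw [this]
  exact (blockSupport k n).finite_toSet.isClopen_biInter fun i _ =>
    (isClopen_discrete {true}).preimage (continuous_apply i)

theorem measurableSet_block (k : ℕ → ℕ) (n : ℕ) : MeasurableSet (block k n) :=
  (isClopen_block k n).isOpen.measurableSet

theorem measureReal_block_inter_block {n n' : ℕ} (h : n ≠ n') :
    μCantor.real (block k n ∩ block k n') = 2⁻¹ ^ k n * 2⁻¹ ^ k n' := by
  have inter_eq : block k n ∩ block k n' =
      {Z | ∀ i ∈ blockSupport k n ∪ blockSupport k n', Z i = true} := by
    ext Z
    simp only [block_eq, Set.mem_inter_iff, Set.mem_ofPred_eq, Finset.mem_union, or_imp, forall_and]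
  rw [inter_eq, measureReal_setOf_forall_mem_eq_true,
    Finset.card_union_of_disjoint (disjoint_blockSupport h), card_blockSupport,
    card_blockSupport, pow_add]

theorem indepSet_block {n n' : ℕ} (h : n ≠ n') :
    ProbabilityTheory.IndepSet (block k n) (block k n') μCantor := by
  rw [ProbabilityTheory.indepSet_iff_measure_inter_eq_mul (measurableSet_block k n)
      (measurableSet_block k n') μCantor,
    ← ENNReal.toReal_eq_toReal_iff' (by finiteness) (by finiteness), ENNReal.toReal_mul]
  simp only [← measureReal_def]
  rw [measureReal_block_inter_block h, measureReal_block, measureReal_block]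

theorem exists_mul_lt_measureReal_inter_block {S : Set ℕ}
    (hS : ¬ Summable (S.indicator fun n => (2⁻¹ : ℝ) ^ k n)) {Q : Set (ℕ → Bool)} {c : ℝ}
    (hc : 2 * c < μCantor.real Q) :
    ∃ n ∈ S, c * 2⁻¹ ^ k n < μCantor.real (Q ∩ block k n) := by
  classical
  have heavy : ∃ F : Finset ℕ, (μCantor.real Q - 2 * c)⁻¹ <
      ∑ n ∈ F, S.indicator (fun n => (2⁻¹ : ℝ) ^ k n) n := by
    by_contra! h
    exact hS (summable_of_sum_le (fun n => Set.indicator_nonneg (fun _ _ => by positivity) n) h)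
  obtain ⟨F, hF⟩ := heavy
  rw [Finset.sum_indicator_eq_sum_filter, inv_lt_iff_one_lt_mul₀ (sub_pos.2 hc)] at hF
  obtain ⟨n, hn, h⟩ := exists_mul_lt_measureReal_inter (μ := μCantor)
    (F := F.filter fun n => n ∈ S) (fun n _ => measurableSet_block k n)
    (fun _ _ _ _ hij => indepSet_block hij) (by simpa only [measureReal_block] using hF)
  exact ⟨n, (Finset.mem_filter.1 hn).2, by rwa [measureReal_block] at h⟩

end Blocks

section OpenIndices

variable {α : Type*} [Primcodable α] {Z : ℕ → Bool}

/-- The `e`-th effectively open subset of Cantor space. -/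
def openSet (e : ℕ) : Set (ℕ → Bool) := openOf {σ | WEnum e (Encodable.encode σ)}

theorem exists_openSet_eq {T : α → List Bool → Prop}
    (hT : SigmaOneIn (fun q : α × List Bool => T q.1 q.2) emptyOracle) :
    ∃ f : α → ℕ, Computable f ∧ ∀ a, openSet (f a) = openOf {σ | T a σ} := by
  obtain ⟨f, hf, h⟩ := exists_wEnum_iff hT.rePred
  exact ⟨f, hf, fun a => by simp only [openSet, h]⟩

/-- A computable choice of indices for a uniformly c.e. family of sets of strings, viewed as a
family of effectively open sets. -/
noncomputable def openIndex {T : α → List Bool → Prop}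
    (hT : SigmaOneIn (fun q : α × List Bool => T q.1 q.2) emptyOracle) : α → ℕ :=
  (exists_openSet_eq hT).choose

section OpenIndex

variable {T : α → List Bool → Prop}
  (hT : SigmaOneIn (fun q : α × List Bool => T q.1 q.2) emptyOracle)

theorem computable_openIndex : Computable (openIndex hT) := (exists_openSet_eq hT).choose_spec.1

theorem openSet_openIndex (a : α) : openSet (openIndex hT a) = openOf {σ | T a σ} :=
  (exists_openSet_eq hT).choose_spec.2 a

end OpenIndex

/-- An index of `{Z | Z r ≠ b}`. -/
noncomputable def bitIndex : ℕ × Bool → ℕ :=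
  openIndex (T := fun q σ => σ[q.1]? = some (!q.2)) (by fun_prop)

@[fun_prop] theorem computable_bitIndex : Computable bitIndex := computable_openIndex _

theorem mem_openSet_bitIndex {r : ℕ} {b : Bool} : Z ∈ openSet (bitIndex (r, b)) ↔ Z r ≠ b := by
  rw [bitIndex, openSet_openIndex, mem_openOf_iff, ← Bool.eq_not]
  simp only [Set.mem_ofPred_eq, getElem?_strPrefix, Option.ite_none_right_eq_some, Option.some_inj]
  exact ⟨fun ⟨_, h⟩ => h.2, fun h => ⟨r + 1, r.lt_succ_self, h⟩⟩

/-- An index of the `n`-th level of the `e`-th sequence of effectively open sets. -/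
noncomputable def testIndex : ℕ × ℕ → ℕ :=
  openIndex (T := fun q σ => ∃ m, OracleComputes q.1 emptyOracle
    (Nat.pair q.2 (Encodable.encode σ)) m) (by fun_prop)

@[fun_prop] theorem computable_testIndex : Computable testIndex := computable_openIndex _

theorem openSet_testIndex (e n : ℕ) :
    openSet (testIndex (e, n)) = testLevel e emptyOracle n := openSet_openIndex _ _

/-- An index of the set of oracles on which the `e`-th functional converges at `n`. -/
noncomputable def domainIndex : ℕ × ℕ → ℕ :=
  openIndex (T := fun q σ => ∃ m, WEnum q.1 (Nat.pair (Encodable.encode σ) (Nat.pair q.2 m)))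
    (by fun_prop)

@[fun_prop] theorem computable_domainIndex : Computable domainIndex := computable_openIndex _

theorem mem_openSet_domainIndex {e n : ℕ} :
    Z ∈ openSet (domainIndex (e, n)) ↔ ∃ m, OracleComputes e Z n m := by
  simp only [domainIndex, openSet_openIndex, mem_openOf_iff]
  exact exists_comm.trans (exists_congr fun m => (exists_isPrefixOf
    (q := fun σ => WEnum e (Nat.pair (Encodable.encode σ) (Nat.pair n m)))).symm)

/-- An index of the complement of `cylinder τ`. -/
noncomputable def cylinderComplIndex : List Bool → ℕ :=
  openIndex (T := fun τ σ => σ.length = τ.length ∧ σ ≠ τ) (by fun_prop)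

@[fun_prop] theorem computable_cylinderComplIndex : Computable cylinderComplIndex :=
  computable_openIndex _

theorem openSet_cylinderComplIndex (τ : List Bool) :
    openSet (cylinderComplIndex τ) = (cylinder τ)ᶜ := by
  ext Z
  simp [cylinderComplIndex, openSet_openIndex, mem_openOf_iff, mem_cylinder_iff]

/-- An index of `block k n`, computable from the pair `(n, k n)`. -/
noncomputable def blockIndex : ℕ × ℕ → ℕ :=
  openIndex (T := fun q σ => ∀ i < q.2, σ[Nat.pair q.1 i]? = some true) (by fun_prop)

@[fun_prop] theorem computable_blockIndex : Computable blockIndex := computable_openIndex _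

theorem openSet_blockIndex (k : ℕ → ℕ) (n : ℕ) : openSet (blockIndex (n, k n)) = block k n := by
  ext Z
  rw [blockIndex, openSet_openIndex, mem_openOf_iff, mem_block_iff_exists_strPrefix]
  rfl

/-- An index of the complement of `block k n`, computable from the pair `(n, k n)`. -/
noncomputable def blockComplIndex : ℕ × ℕ → ℕ :=
  openIndex (T := fun q σ => ∃ i < q.2, σ[Nat.pair q.1 i]? = some false) (by fun_prop)

@[fun_prop] theorem computable_blockComplIndex : Computable blockComplIndex :=
  computable_openIndex _

theorem openSet_blockComplIndex (k : ℕ → ℕ) (n : ℕ) :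
    openSet (blockComplIndex (n, k n)) = (block k n)ᶜ := by
  ext Z
  simp only [blockComplIndex, openSet_openIndex, mem_openOf_iff, block, Set.mem_compl_iff,
    Set.mem_ofPred_eq, getElem?_strPrefix, Option.ite_none_right_eq_some, Option.some_inj,
    not_forall, Bool.not_eq_true, exists_prop]
  constructor
  · rintro ⟨_, i, hi, -, h⟩
    exact ⟨i, hi, h⟩
  · rintro ⟨i, hi, h⟩
    exact ⟨_, i, hi, Nat.lt_succ_self _, h⟩

end OpenIndices

/-! ### Sacks' theorem -/

section SacksTheorem

theorem lt_two_mul_measureReal_inter_iff_of_ae {Ω : Type*} [MeasurableSpace Ω] {μ : Measure Ω}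
    [IsFiniteMeasure μ] {C Q U : Set Ω} {p : Prop} (hQ : μ.real C < 2 * μ.real (Q ∩ C))
    (hU : MeasurableSet U) (h : ∀ᵐ R ∂μ, R ∈ Q → (R ∈ U ↔ p)) :
    μ.real C < 2 * μ.real (C ∩ U) ↔ p := by
  constructor
  · intro hlt
    by_contra hp
    have hle : μ.real (Q ∩ C) ≤ μ.real (C \ U) :=
      ENNReal.toReal_mono (by finiteness) (measure_mono_ae (h.mono fun R hR hRQ =>
        ⟨hRQ.2, fun hRU => hp ((hR hRQ.1).1 hRU)⟩))
    have hadd : μ.real (C ∩ U) + μ.real (C \ U) = μ.real C := measureReal_inter_add_sdiff hU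
    linarith
  · rintro hp
    refine hQ.trans_le ?_
    gcongr 2 * ?_
    exact ENNReal.toReal_mono (by finiteness)
      (measure_mono_ae (h.mono fun R hR hRQ => ⟨hRQ.2, (hR hRQ.1).2 hp⟩))

theorem cylinder_inter_openOf (τ : List Bool) (S : Set (List Bool)) :
    cylinder τ ∩ openOf S = openOf {σ | σ.take τ.length = τ ∧ ∃ i, σ.take i ∈ S} := by
  ext R
  simp only [Set.mem_inter_iff, mem_openOf_iff, mem_cylinder_iff, Set.mem_ofPred_eq, take_strPrefix]
  constructor
  · rintro ⟨hpre, i, hi⟩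
    exact ⟨max τ.length i, by rwa [min_eq_left (le_max_left _ _)], i,
      by rwa [min_eq_left (le_max_right _ _)]⟩
  · rintro ⟨t, hpre, i, hi⟩
    have ht : τ.length ≤ t := by simpa using congrArg List.length hpre
    exact ⟨by rwa [min_eq_left ht] at hpre, _, hi⟩

theorem SigmaOneIn.measureReal_cylinder_lt_two_mul_inter {α : Type*} [Primcodable α]
    {X : ℕ → Bool} {T : α → List Bool → Prop}
    (hT : SigmaOneIn (fun q : α × List Bool => T q.1 q.2) X) (τ : List Bool) :
    SigmaOneIn (fun a => μCantor.real (cylinder τ) <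
      2 * μCantor.real (cylinder τ ∩ openOf {σ | T a σ})) X := by
  have hT' : SigmaOneIn (fun q : α × List Bool =>
      q.2.take τ.length = τ ∧ ∃ i, T q.1 (q.2.take i)) X :=
    .and (by fun_prop) (.projection (hT.comp (f := fun r : (α × List Bool) × ℕ =>
      (r.1.1, r.1.2.take r.2)) (by fun_prop)))
  refine (SigmaOneIn.lt_measureReal_openOf (T := fun a σ =>
    σ.take τ.length = τ ∧ ∃ i, T a (σ.take i)) hT' (.const 1) (.const (τ.length + 1))).of_iff
      fun a => ?_
  rw [cylinder_inter_openOf, measureReal_cylinder, inv_pow, inv_lt_iff_one_lt_mul₀ (by positivity),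
    Nat.cast_one, pow_succ', ← mul_assoc, mul_comm (2 : ℝ)]
  rfl

theorem mem_openOf_iff_oracleComputes {R : ℕ → Bool} {e n m : ℕ} :
    R ∈ openOf {σ | WEnum e (Nat.pair (Encodable.encode σ) (Nat.pair n m))} ↔
      OracleComputes e R n m :=
  mem_openOf_iff.trans (exists_isPrefixOf
    (q := fun σ => WEnum e (Nat.pair (Encodable.encode σ) (Nat.pair n m)))).symm

/-- Sacks' majority vote: on a cylinder where `Q` has density more than `1/2`, the value of `Z n`
is the output that the functional produces with probability more than `1/2`. -/
theorem computableSet_of_ae_oracleComputes {Q : Set (ℕ → Bool)} (hQ : 0 < μCantor.real Q)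
    {e : ℕ} {Z : ℕ → Bool}
    (h : ∀ᵐ R ∂μCantor, R ∈ Q → ∀ n m, OracleComputes e R n m ↔ m = natOfBool (Z n)) :
    ComputableSet Z := by
  obtain ⟨τ, hτ⟩ := exists_measureReal_cylinder_lt_two_mul_inter hQ
  let T (q : ℕ × ℕ) (σ : List Bool) : Prop :=
    WEnum e (Nat.pair (Encodable.encode σ) (Nat.pair q.1 q.2))
  have majority (n m : ℕ) : μCantor.real (cylinder τ) <
      2 * μCantor.real (cylinder τ ∩ openOf {σ | T (n, m) σ}) ↔ m = natOfBool (Z n) :=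
    lt_two_mul_measureReal_inter_iff_of_ae hτ (isOpen_openOf _).measurableSet
      (h.mono fun R hR hRQ => mem_openOf_iff_oracleComputes.trans (hR hRQ n m))
  have hT : SigmaOneIn (fun q : (ℕ × ℕ) × List Bool => T q.1 q.2) emptyOracle := by fun_prop
  have hgraph : SigmaOneIn (fun q : Unit × ℕ × ℕ => q.2.2 = natOfBool (Z q.2.1)) emptyOracle :=
    ((hT.measureReal_cylinder_lt_two_mul_inter τ).comp (f := fun q : Unit × ℕ × ℕ => q.2)
      (by fun_prop)).of_iff fun q => (majority q.2.1 q.2.2).symm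
  obtain ⟨f, -, hf⟩ := hgraph.exists_index (p := fun _ n m => m = natOfBool (Z n))
  exact ⟨f (), hf ()⟩

end SacksTheorem

/-! ### Forcing conditions -/

section Conditions

/-- The `Π⁰₁` class of sequences that avoid the effectively open sets with indices in `l`. -/
def avoiding (l : List ℕ) : Set (ℕ → Bool) := {Z | ∀ e ∈ l, Z ∉ openSet e}

/-- The union of the blocks of the elements `n ≥ j` of `B`. -/
def blocksFrom (B : ℕ → Bool) (k : ℕ → ℕ) (j : ℕ) : Set (ℕ → Bool) :=
  ⋃ n ∈ {n | j ≤ n ∧ B n = true}, block k n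

/-- A forcing condition `(l, j)`: a finite list of indices of effectively open sets to be avoided,
and a number `j` below which all blocks have been decided. -/
abbrev Condition := List ℕ × ℕ

/-- The sequences meeting the condition `c` that enter no undecided block. -/
def paths (B : ℕ → Bool) (k : ℕ → ℕ) (c : Condition) : Set (ℕ → Bool) :=
  avoiding c.1 \ blocksFrom B k c.2

/-- The conditions used in the construction: those that leave a class of positive measure. -/
def IsLarge (B : ℕ → Bool) (k : ℕ → ℕ) (c : Condition) : Prop := 0 < μCantor.real (paths B k c)

/-- The extension of a condition that also avoids `openSet e`. -/
def avoid (c : Condition) (e : ℕ) : Condition := (e :: c.1, c.2)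

@[fun_prop] theorem computable_avoid {α : Type*} [Primcodable α] {c : α → Condition} {e : α → ℕ}
    (hc : Computable c) (he : Computable e) : Computable fun a => avoid (c a) (e a) := by
  unfold avoid
  fun_prop

variable {A B : ℕ → Bool} {k : ℕ → ℕ} {c : Condition} {l l' : List ℕ} {e j : ℕ}

theorem avoiding_cons : avoiding (e :: l) = avoiding l \ openSet e := by
  ext Z
  simp [avoiding, and_comm]

theorem avoiding_append : avoiding (l ++ l') = avoiding l ∩ avoiding l' := by
  ext Z
  simp [avoiding, or_imp, forall_and]

theorem avoiding_anti (h : l ⊆ l') : avoiding l' ⊆ avoiding l := fun _ hZ e he => hZ e (h he)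

theorem avoiding_eq_compl_openOf (l : List ℕ) :
    avoiding l = (openOf {σ | ∃ e ∈ l, WEnum e (Encodable.encode σ)})ᶜ := by
  ext Z
  simp only [avoiding, openSet, mem_openOf_iff, Set.mem_compl_iff, Set.mem_ofPred_eq]
  grind

theorem isClosed_avoiding (l : List ℕ) : IsClosed (avoiding l) :=
  avoiding_eq_compl_openOf l ▸ (isOpen_openOf _).isClosed_compl

theorem blocksFrom_eq_openOf (B : ℕ → Bool) (k : ℕ → ℕ) (j : ℕ) : blocksFrom B k j =
    openOf {σ | ∃ n, j ≤ n ∧ B n = true ∧ ∀ i < k n, σ[Nat.pair n i]? = some true} := by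
  ext Z
  simp only [blocksFrom, mem_openOf_iff, Set.mem_iUnion, mem_block_iff_exists_strPrefix,
    Set.mem_ofPred_eq, exists_prop]
  rw [exists_comm]
  simp only [exists_and_left, and_assoc]

theorem paths_eq_compl_openOf (B : ℕ → Bool) (k : ℕ → ℕ) (c : Condition) :
    paths B k c = (openOf {σ | (∃ e ∈ c.1, WEnum e (Encodable.encode σ)) ∨
      ∃ n, c.2 ≤ n ∧ B n = true ∧ ∀ i < k n, σ[Nat.pair n i]? = some true})ᶜ := by
  rw [paths, avoiding_eq_compl_openOf, blocksFrom_eq_openOf, Set.sdiff_eq, ← Set.compl_union]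
  exact congrArg _ (Set.biUnion_union _ _ _).symm

theorem paths_avoid (c : Condition) (e : ℕ) :
    paths B k (avoid c e) = paths B k c \ openSet e := by
  simp only [paths, avoid, avoiding_cons, Set.sdiff_sdiff_comm]

theorem not_isLarge_iff : ¬ IsLarge B k c ↔ ∀ᵐ Z ∂μCantor, Z ∉ paths B k c := by
  rw [IsLarge, not_lt, measureReal_nonneg.ge_iff_eq', measureReal_eq_zero_iff,
    measure_eq_zero_iff_ae_notMem]

theorem ae_mem_openSet_of_not_isLarge_avoid (h : ¬ IsLarge B k (avoid c e)) :
    ∀ᵐ Z ∂μCantor, Z ∈ paths B k c → Z ∈ openSet e := by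
  simpa only [not_isLarge_iff, paths_avoid, Set.mem_sdiff, not_and, not_not] using h

theorem IsLarge.exists_avoid_bitIndex (hc : IsLarge B k c) (r : ℕ) :
    ∃ b, IsLarge B k (avoid c (bitIndex (r, b))) := by
  by_contra! h
  refine not_isLarge_iff.2 ?_ hc
  filter_upwards [ae_mem_openSet_of_not_isLarge_avoid (h true),
    ae_mem_openSet_of_not_isLarge_avoid (h false)] with Z htrue hfalse hZ
  exact mem_openSet_bitIndex.1 (htrue hZ) (Bool.eq_true_of_not_eq_false
    (mem_openSet_bitIndex.1 (hfalse hZ)))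

theorem IsLarge.exists_avoid_testIndex (hc : IsLarge B k c) {e : ℕ}
    (he : ∀ n, μCantor (testLevel e emptyOracle n) ≤ 2⁻¹ ^ n) :
    ∃ n, IsLarge B k (avoid c (testIndex (e, n))) := by
  by_contra! h
  obtain ⟨n, hn⟩ := exists_pow_lt_of_lt_one hc (by norm_num : (2⁻¹ : ℝ) < 1)
  refine hn.not_ge ?_
  have hle : μCantor (paths B k c) ≤ 2⁻¹ ^ n :=
    (measure_mono_ae (ae_mem_openSet_of_not_isLarge_avoid (h n))).trans
      (openSet_testIndex e n ▸ he n)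
  simpa [measureReal_def] using ENNReal.toReal_mono (by finiteness) hle

theorem IsLarge.computableSet (hc : IsLarge B k c) {e : ℕ} {Z : ℕ → Bool}
    (hdomain : ∀ n, ¬ IsLarge B k (avoid c (domainIndex (e, n))))
    (hsplit : ∀ τ n m, m ≠ natOfBool (Z n) →
      WEnum e (Nat.pair (Encodable.encode τ) (Nat.pair n m)) →
      ¬ IsLarge B k (avoid c (cylinderComplIndex τ))) :
    ComputableSet Z := by
  refine computableSet_of_ae_oracleComputes (Q := paths B k c) hc (e := e) ?_
  have htotal : ∀ᵐ R ∂μCantor, ∀ n, R ∈ paths B k c → ∃ m, OracleComputes e R n m :=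
    ae_all_iff.2 fun n => by
      simpa only [mem_openSet_domainIndex] using ae_mem_openSet_of_not_isLarge_avoid (hdomain n)
  have hagree : ∀ᵐ R ∂μCantor, ∀ τ n m, m ≠ natOfBool (Z n) →
      WEnum e (Nat.pair (Encodable.encode τ) (Nat.pair n m)) →
      R ∈ paths B k c → R ∉ cylinder τ := by
    simp only [ae_all_iff]
    intro τ n m hm hτ
    simpa only [openSet_cylinderComplIndex, Set.mem_compl_iff] using
      ae_mem_openSet_of_not_isLarge_avoid (hsplit τ n m hm hτ)
  filter_upwards [htotal, hagree] with R htotal hagree hR n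
  have hval : ∀ m, OracleComputes e R n m → m = natOfBool (Z n) := fun m ⟨τ, hτR, hτ⟩ =>
    by_contra fun hm => hagree τ n m hm hτ hR hτR
  obtain ⟨m, hm⟩ := htotal n hR
  exact fun m' => ⟨hval m', fun h => by rwa [h, ← hval m hm]⟩

theorem SigmaOneIn.measureReal_compl_openOf_lt {α : Type*} [Primcodable α] {X : ℕ → Bool}
    {T : α → List Bool → Prop} (hT : SigmaOneIn (fun q : α × List Bool => T q.1 q.2) X)
    {p : α → ℕ} (hp : Computable p) :
    SigmaOneIn (fun a => μCantor.real (openOf {σ | T a σ})ᶜ < 2⁻¹ ^ p a) X := by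
  have hbound : Computable fun a => 2 ^ p a - 1 := by fun_prop
  refine (hT.lt_measureReal_openOf hbound hp).of_iff fun a => ?_
  rw [probReal_compl_eq_one_sub (isOpen_openOf _).measurableSet, inv_pow, ← one_div,
    lt_div_iff₀ (by positivity), Nat.cast_sub Nat.one_le_two_pow, sub_mul, Nat.cast_pow,
    Nat.cast_ofNat, Nat.cast_one, one_mul, sub_lt_comm]

theorem SigmaOneIn.isLarge (hBA : TuringLE B A) (hk : Computable k) :
    SigmaOneIn (IsLarge B k) (jump A) := by
  let T (c : Condition) (σ : List Bool) : Prop := (∃ e ∈ c.1, WEnum e (Encodable.encode σ)) ∨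
    ∃ n, c.2 ≤ n ∧ B n = true ∧ ∀ i < k n, σ[Nat.pair n i]? = some true
  have hT : SigmaOneIn (fun q : (Condition × ℕ) × List Bool => T q.1.1 q.2) A := by
    fun_prop (disch := assumption)
  have hsmall : SigmaOneIn
      (fun q : Condition × ℕ => μCantor.real (paths B k q.1) < 2⁻¹ ^ q.2) A := by
    simp only [paths_eq_compl_openOf]
    exact SigmaOneIn.measureReal_compl_openOf_lt (T := fun q : Condition × ℕ => T q.1) hT .snd
  have hlarge : SigmaOneIn (fun c => ∃ p, ¬ μCantor.real (paths B k c) < 2⁻¹ ^ p) (jump A) :=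
    .projection hsmall.not_jump
  refine hlarge.of_iff fun c => ?_
  simp only [IsLarge, not_lt]
  exact ⟨fun hc => (exists_pow_lt_of_lt_one hc (by norm_num)).imp fun _ => le_of_lt,
    fun ⟨p, hp⟩ => hp.trans_lt' (by positivity)⟩

end Conditions

/-! ### Coding a bit -/

section Coding

variable {A B colour : ℕ → Bool} {k : ℕ → ℕ} {c : Condition}

theorem measureReal_inter_biUnion_le {Ω : Type*} [MeasurableSpace Ω] {μ : Measure Ω}
    [IsFiniteMeasure μ] {T : Set ℕ} {V : ℕ → Set Ω} {S : Set Ω} {w : ℕ → ℝ} (hw : ∀ n, 0 ≤ w n)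
    (hsum : Summable fun n : T => w n) (hle : ∀ n ∈ T, μ.real (S ∩ V n) ≤ w n) :
    μ.real (S ∩ ⋃ n ∈ T, V n) ≤ ∑' n : T, w n := by
  refine ENNReal.toReal_le_of_le_ofReal (tsum_nonneg fun n => hw n) ?_
  rw [Set.inter_iUnion₂, ENNReal.ofReal_tsum_of_nonneg (f := fun n : T => w n) (fun n => hw n) hsum]
  exact (measure_biUnion_le μ T.to_countable _).trans (ENNReal.tsum_le_tsum fun n =>
    (ENNReal.le_ofReal_iff_toReal_le (by finiteness) (hw n)).2 (hle n n.2))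

/-- The events `block k n` with `n ∈ B` large have small total probability, even conditionally on
an event `S` of probability `a` that is independent of them. -/
theorem exists_forall_measureReal_inter_biUnion_block_lt
    (hB : Summable ({n | B n = true}.indicator fun n => (2⁻¹ : ℝ) ^ k n)) {ε : ℝ} (hε : 0 < ε) :
    ∃ N, ∀ T ⊆ {n | N ≤ n ∧ B n = true}, ∀ (S : Set (ℕ → Bool)) (a : ℝ), 0 < a →
      (∀ n ∈ T, μCantor.real (S ∩ block k n) ≤ a * 2⁻¹ ^ k n) →
      μCantor.real (S ∩ ⋃ n ∈ T, block k n) < a * ε := by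
  obtain ⟨F, hF⟩ := hB.tsum_vanishing (Iio_mem_nhds hε)
  refine ⟨F.sup id + 1, fun T hT S a ha hS => ?_⟩
  have hTB : T ⊆ {n | B n = true} := fun n hn => (hT hn).2
  have hsum := (summable_subtype_iff_indicator.2 hB).comp_injective (Set.inclusion_injective hTB)
  have hTF : Disjoint T F := Set.disjoint_left.2 fun n hn hnF =>
    (Nat.lt_of_succ_le (hT hn).1).not_ge (Finset.le_sup (f := id) hnF)
  have htail : ∑' n : T, (2⁻¹ : ℝ) ^ k n < ε := by
    rw [← tsum_congr fun n : T => Set.indicator_of_mem (hTB n.2) fun n => (2⁻¹ : ℝ) ^ k n]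
    exact hF T hTF
  calc μCantor.real (S ∩ ⋃ n ∈ T, block k n)
      ≤ ∑' n : T, a * 2⁻¹ ^ k n :=
        measureReal_inter_biUnion_le (V := block k) (w := fun n => a * 2⁻¹ ^ k n)
          (fun n => by positivity) (hsum.mul_left a) hS
    _ = a * ∑' n : T, 2⁻¹ ^ k n := tsum_mul_left
    _ < a * ε := mul_lt_mul_of_pos_left htail ha

theorem exists_isLarge_nil
    (hB : Summable ({n | B n = true}.indicator fun n => (2⁻¹ : ℝ) ^ k n)) :
    ∃ j, IsLarge B k ([], j) := by
  obtain ⟨N, hN⟩ := exists_forall_measureReal_inter_biUnion_block_lt hB one_pos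
  have hlt := hN {n | N ≤ n ∧ B n = true} subset_rfl Set.univ 1 one_pos fun n _ => by
    rw [Set.univ_inter, measureReal_block, one_mul]
  have huniv : avoiding [] = Set.univ := by simp [avoiding]
  have hmeas : MeasurableSet (blocksFrom B k N) :=
    .biUnion (Set.to_countable _) fun n _ => measurableSet_block k n
  refine ⟨N, ?_⟩
  rw [IsLarge, paths, huniv, ← Set.compl_eq_univ_sdiff, probReal_compl_eq_one_sub hmeas, sub_pos]
  simpa only [Set.univ_inter, one_mul] using! hlt

/-- The indices of the blocks of the elements of `B` in the interval `[a, b)`. -/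
noncomputable def blockIndices (B : ℕ → Bool) (k : ℕ → ℕ) (a b : ℕ) : List ℕ :=
  ((List.range b).filter fun n => decide (a ≤ n) && B n).map fun n => blockIndex (n, k n)

theorem mem_avoiding_blockIndices {a b : ℕ} {Z : ℕ → Bool} :
    Z ∈ avoiding (blockIndices B k a b) ↔ ∀ n < b, a ≤ n → B n = true → Z ∉ block k n := by
  simp only [avoiding, blockIndices, List.forall_mem_map, Set.mem_ofPred_eq, openSet_blockIndex]
  simp [and_imp]

theorem IsCoverless.exists_le_measureReal_avoiding_inter_block (h : IsCoverless A B k colour)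
    {l : List ℕ} {p : ℕ} (hp : 2 * 2⁻¹ ^ p < μCantor.real (avoiding l)) (N : ℕ) (b : Bool) :
    ∃ n ≥ N, B n = true ∧ colour n = b ∧
      2⁻¹ ^ k n * 2⁻¹ ^ p ≤ μCantor.real (avoiding l ∩ block k n) := by
  by_contra! hlight
  let S : Set ℕ := {n | μCantor.real (avoiding l ∩ block k n) < 2⁻¹ ^ (k n + p)}
  have hS : REPred fun n => n < N ∨ n ∈ S := by
    have hlt := SigmaOneIn.measureReal_compl_openOf_lt (X := emptyOracle)
      (T := fun n σ => ∃ e ∈ blockComplIndex (n, k n) :: l, WEnum e (Encodable.encode σ))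
      (by have := h.computable_exponent; fun_prop) (p := fun n => k n + p)
      (by have := h.computable_exponent; fun_prop)
    refine SigmaOneIn.rePred (.or (by fun_prop) (hlt.of_iff fun n => ?_))
    rw [← avoiding_eq_compl_openOf, avoiding_cons, openSet_blockComplIndex, sdiff_compl]
    exact Iff.rfl
  have hcofinite : ({n | n < N ∨ n ∈ S} : Set ℕ).indicator (fun n => (2⁻¹ : ℝ) ^ k n)
      =ᶠ[Filter.cofinite] S.indicator fun n => (2⁻¹ : ℝ) ^ k n := by
    filter_upwards [(Set.finite_Iio N).compl_mem_cofinite] with n hn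
    simp only [Set.indicator, Set.mem_ofPred_eq, Set.mem_Iio.not.1 hn, false_or]
  have hsum : ¬ Summable (S.indicator fun n => (2⁻¹ : ℝ) ^ k n) := by
    rw [← summable_congr_cofinite hcofinite]
    refine h.not_summable (i := b) hS fun n hn hcolour => or_iff_not_imp_left.2 fun hN => ?_
    simpa only [S, Set.mem_ofPred_eq, pow_add] using hlight n (not_lt.1 hN) hn hcolour
  obtain ⟨n, hnS, hn⟩ := exists_mul_lt_measureReal_inter_block hsum hp
  exact hn.not_ge (by rw [← pow_add, add_comm]; exact hnS.le)

/-- The extension of the condition `c` whose paths enter the block of `n` and the block of no other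
element of `B` from `c.2` on. -/
noncomputable def enterBlock (B : ℕ → Bool) (k : ℕ → ℕ) (c : Condition) (n : ℕ) : Condition :=
  (blockComplIndex (n, k n) :: (blockIndices B k c.2 n ++ c.1), n + 1)

theorem mem_paths_enterBlock {n : ℕ} (hn : c.2 ≤ n) {Z : ℕ → Bool} :
    Z ∈ paths B k (enterBlock B k c n) ↔ Z ∈ avoiding c.1 ∧ Z ∈ block k n ∧
      ∀ n' ≥ c.2, n' ≠ n → B n' = true → Z ∉ block k n' := by
  simp only [paths, enterBlock, avoiding_cons, avoiding_append, openSet_blockComplIndex,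
    Set.mem_sdiff, Set.mem_inter_iff, mem_avoiding_blockIndices, blocksFrom, Set.mem_iUnion]
  grind

/-- The condition `c'` codes the bit `b`: the first block of an element of `B` from `c.2` on that
is not avoided belongs to an element of colour `b`, and the next block search starts after it. -/
def Codes (B colour : ℕ → Bool) (k : ℕ → ℕ) (b : Bool) (c c' : Condition) : Prop :=
  ∃ n, c.2 ≤ n ∧ B n = true ∧ colour n = b ∧ c'.2 = n + 1 ∧ c.1 ⊆ c'.1 ∧
    blockComplIndex (n, k n) ∈ c'.1 ∧
    ∀ n' < n, c.2 ≤ n' → B n' = true → blockIndex (n', k n') ∈ c'.1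

theorem codes_enterBlock {n : ℕ} (hn : c.2 ≤ n) (hB : B n = true) :
    Codes B colour k (colour n) c (enterBlock B k c n) := by
  refine ⟨n, hn, hB, rfl, rfl, ?_, ?_, fun n' hn' hcn' hBn' => ?_⟩
  · exact List.subset_cons_of_subset _ (List.subset_append_right _ _)
  · exact List.mem_cons_self
  · simp only [enterBlock, blockIndices, List.mem_cons, List.mem_append, List.mem_map,
      List.mem_filter, List.mem_range]
    grind

theorem IsCoverless.exists_codes (h : IsCoverless A B k colour) (hc : IsLarge B k c) (b : Bool) :
    ∃ c', Codes B colour k b c c' ∧ IsLarge B k c' := by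
  obtain ⟨p, hp⟩ : ∃ p : ℕ, 2⁻¹ ^ p < μCantor.real (paths B k c) / 2 :=
    exists_pow_lt_of_lt_one (half_pos hc) (by norm_num)
  obtain ⟨N, hN⟩ := exists_forall_measureReal_inter_biUnion_block_lt h.summable
    (ε := 2⁻¹ ^ p) (by positivity)
  let l := blockIndices B k c.2 (max N c.2) ++ c.1
  have hl {Z : ℕ → Bool} : Z ∈ avoiding l ↔ Z ∈ avoiding c.1 ∧
      ∀ n' < max N c.2, c.2 ≤ n' → B n' = true → Z ∉ block k n' := by
    rw [avoiding_append, Set.mem_inter_iff, mem_avoiding_blockIndices, and_comm]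
  have hpaths : paths B k c ⊆ avoiding l := by
    simp only [Set.subset_def, hl, paths, blocksFrom, Set.mem_sdiff, Set.mem_iUnion]
    grind
  obtain ⟨n, hn, hBn, rfl, hheavy⟩ := h.exists_le_measureReal_avoiding_inter_block
    (l := l) (p := p) (by linarith [measureReal_mono (μ := μCantor) hpaths]) (max N c.2) b
  have hcn : c.2 ≤ n := le_of_max_le_right hn
  refine ⟨enterBlock B k c n, codes_enterBlock hcn hBn, ?_⟩
  let T : Set ℕ := {n' | max N c.2 ≤ n' ∧ B n' = true ∧ n' ≠ n}
  have hlight : μCantor.real (block k n ∩ ⋃ n' ∈ T, block k n') < 2⁻¹ ^ k n * 2⁻¹ ^ p :=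
    hN T (fun n' hn' => ⟨le_of_max_le_left hn'.1, hn'.2.1⟩) _ _ (by positivity)
      fun n' hn' => (measureReal_block_inter_block hn'.2.2.symm).le
  have hcover : avoiding l ∩ block k n ⊆
      paths B k (enterBlock B k c n) ∪ (block k n ∩ ⋃ n' ∈ T, block k n') := by
    intro Z ⟨hZl, hZn⟩
    simp only [Set.mem_union, mem_paths_enterBlock hcn, Set.mem_inter_iff, Set.mem_iUnion]
    grind
  have hle := (measureReal_mono hcover).trans (measureReal_union_le (μ := μCantor) _ _)
  rw [IsLarge]
  linarith

end Coding

section Stages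

variable {A B X colour : ℕ → Bool} {k : ℕ → ℕ} {P : ℕ → Prop} {b : Bool} {n : ℕ}
  {c c' c'' : Condition}

/-- The condition `c'` arises from `c` by avoiding one of the open sets with index in `P`, if this
can be done by a large condition, and otherwise `c' = c`. -/
def Seek (B : ℕ → Bool) (k : ℕ → ℕ) (P : ℕ → Prop) (c c' : Condition) : Prop :=
  (∃ e, P e ∧ IsLarge B k (avoid c e) ∧ c' = avoid c e) ∨
    (¬ ∃ e, P e ∧ IsLarge B k (avoid c e)) ∧ c' = c

theorem exists_seek (B : ℕ → Bool) (k : ℕ → ℕ) (P : ℕ → Prop) (c : Condition) :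
    ∃ c', Seek B k P c c' := by
  by_cases h : ∃ e, P e ∧ IsLarge B k (avoid c e)
  · obtain ⟨e, he, hlarge⟩ := h
    exact ⟨_, .inl ⟨e, he, hlarge, rfl⟩⟩
  · exact ⟨c, .inr ⟨h, rfl⟩⟩

theorem Seek.isLarge (h : Seek B k P c c') (hc : IsLarge B k c) : IsLarge B k c' := by
  obtain ⟨e, -, hlarge, rfl⟩ | ⟨-, rfl⟩ := h
  exacts [hlarge, hc]

theorem Seek.snd_eq (h : Seek B k P c c') : c'.2 = c.2 := by
  obtain ⟨e, -, -, rfl⟩ | ⟨-, rfl⟩ := h <;> rfl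

theorem Seek.fst_subset (h : Seek B k P c c') : c.1 ⊆ c'.1 := by
  obtain ⟨e, -, -, rfl⟩ | ⟨-, rfl⟩ := h
  exacts [List.subset_cons_self _ _, List.Subset.refl _]

theorem Seek.exists_mem_or (h : Seek B k P c c') :
    (∃ e ∈ c'.1, P e) ∨ ∀ e, P e → ¬ IsLarge B k (avoid c e) := by
  obtain ⟨e, he, -, rfl⟩ | ⟨h, -⟩ := h
  · exact .inl ⟨e, List.mem_cons_self, he⟩
  · exact .inr fun e he hlarge => h ⟨e, he, hlarge⟩

theorem Seek.exists_mem (h : Seek B k P c c') (he : ∃ e, P e ∧ IsLarge B k (avoid c e)) :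
    ∃ e ∈ c'.1, P e :=
  h.exists_mem_or.resolve_right fun h => he.elim fun e he => h e he.1 he.2

theorem Codes.of_seek (h : Codes B colour k b c' c'') (hseek : Seek B k P c c') :
    Codes B colour k b c c'' := by
  obtain ⟨n, hn, hB, hcolour, hsnd, hsubset, hmem, hskip⟩ := h
  rw [hseek.snd_eq] at hn hskip
  exact ⟨n, hn, hB, hcolour, hsnd, List.Subset.trans hseek.fst_subset hsubset, hmem, hskip⟩

theorem Codes.fst_subset (h : Codes B colour k b c c') : c.1 ⊆ c'.1 :=
  h.elim fun _ h => h.2.2.2.2.1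

/-- The indices whose avoidance decides the value of a sequence at `n`. -/
def DecidesBit (n e : ℕ) : Prop := ∃ b, e = bitIndex (n, b)

/-- The indices of the levels of the `n`-th Martin-Löf test. -/
def IsTestLevel (n e : ℕ) : Prop := ∃ m, e = testIndex (n, m)

/-- The indices whose avoidance makes the functional with index `n.unpair.1` either partial or
different from the functional with index `n.unpair.2` applied to `Y`. -/
def Separates (Y : ℕ → Bool) (n e : ℕ) : Prop :=
  (∃ i, e = domainIndex (n.unpair.1, i)) ∨ ∃ τ i m m', m ≠ m' ∧
    WEnum n.unpair.1 (Nat.pair (Encodable.encode τ) (Nat.pair i m)) ∧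
    OracleComputes n.unpair.2 Y i m' ∧ e = cylinderComplIndex τ

/-- Stage `n` of the construction: decide the value at `n`, avoid a level of the `n`-th test, act
for the `n`-th pair of functionals, and code the bit `b`. -/
def Stage (A B colour : ℕ → Bool) (k : ℕ → ℕ) (n : ℕ) (b : Bool) (c c' : Condition) : Prop :=
  ∃ c₁ c₂ c₃, Seek B k (DecidesBit n) c c₁ ∧ Seek B k (IsTestLevel n) c₁ c₂ ∧
    Seek B k (Separates (jump A) n) c₂ c₃ ∧ Codes B colour k b c₃ c' ∧ IsLarge B k c'

theorem IsCoverless.exists_stage (h : IsCoverless A B k colour) (hc : IsLarge B k c) (n : ℕ)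
    (b : Bool) : ∃ c', Stage A B colour k n b c c' := by
  obtain ⟨c₁, h₁⟩ := exists_seek B k (DecidesBit n) c
  obtain ⟨c₂, h₂⟩ := exists_seek B k (IsTestLevel n) c₁
  obtain ⟨c₃, h₃⟩ := exists_seek B k (Separates (jump A) n) c₂
  obtain ⟨c', hcodes, hlarge⟩ := h.exists_codes (h₃.isLarge (h₂.isLarge (h₁.isLarge hc))) b
  exact ⟨c', c₁, c₂, c₃, h₁, h₂, h₃, hcodes, hlarge⟩

theorem Stage.isLarge (h : Stage A B colour k n b c c') : IsLarge B k c' := by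
  obtain ⟨-, -, -, -, -, -, -, hlarge⟩ := h
  exact hlarge

theorem Stage.codes (h : Stage A B colour k n b c c') : Codes B colour k b c c' := by
  obtain ⟨c₁, c₂, c₃, h₁, h₂, h₃, hcodes, -⟩ := h
  exact ((hcodes.of_seek h₃).of_seek h₂).of_seek h₁

theorem Stage.exists_bitIndex_mem (h : Stage A B colour k n b c c') (hc : IsLarge B k c) :
    ∃ v, bitIndex (n, v) ∈ c'.1 := by
  obtain ⟨c₁, c₂, c₃, h₁, h₂, h₃, hcodes, -⟩ := h
  obtain ⟨v, hv⟩ := hc.exists_avoid_bitIndex n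
  obtain ⟨e, he, v, rfl⟩ := h₁.exists_mem ⟨_, ⟨v, rfl⟩, hv⟩
  exact ⟨v, hcodes.fst_subset (h₃.fst_subset (h₂.fst_subset he))⟩

theorem Stage.exists_testIndex_mem (h : Stage A B colour k n b c c') (hc : IsLarge B k c)
    (htest : ∀ m, μCantor (testLevel n emptyOracle m) ≤ 2⁻¹ ^ m) :
    ∃ m, testIndex (n, m) ∈ c'.1 := by
  obtain ⟨c₁, c₂, c₃, h₁, h₂, h₃, hcodes, -⟩ := h
  obtain ⟨m, hm⟩ := (h₁.isLarge hc).exists_avoid_testIndex htest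
  obtain ⟨e, he, m, rfl⟩ := h₂.exists_mem ⟨_, ⟨m, rfl⟩, hm⟩
  exact ⟨m, hcodes.fst_subset (h₃.fst_subset he)⟩

theorem Stage.exists_separates_mem_or (h : Stage A B colour k n b c c') (hc : IsLarge B k c) :
    (∃ e ∈ c'.1, Separates (jump A) n e) ∨
      ∃ c'', IsLarge B k c'' ∧ ∀ e, Separates (jump A) n e → ¬ IsLarge B k (avoid c'' e) := by
  obtain ⟨c₁, c₂, c₃, h₁, h₂, h₃, hcodes, -⟩ := h
  exact h₃.exists_mem_or.imp (fun ⟨e, he, hsep⟩ => ⟨e, hcodes.fst_subset he, hsep⟩)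
    fun h => ⟨c₂, h₂.isLarge (h₁.isLarge hc), h⟩

theorem SigmaOneIn.relationComp {α β : Type*} [Primcodable α] [Primcodable β]
    {R S : α → β → β → Prop}
    (hR : SigmaOneIn (fun q : α × β × β => R q.1 q.2.1 q.2.2) X)
    (hS : SigmaOneIn (fun q : α × β × β => S q.1 q.2.1 q.2.2) X) :
    SigmaOneIn (fun q : α × β × β => Relation.Comp (R q.1) (S q.1) q.2.1 q.2.2) X :=
  .projection (.and (hR.comp (f := fun r : (α × β × β) × β => (r.1.1, r.1.2.1, r.2))
    (by fun_prop)) (hS.comp (f := fun r : (α × β × β) × β => (r.1.1, r.2, r.1.2.2))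
    (by fun_prop)))

theorem SigmaOneIn.seek (hBA : TuringLE B A) (hk : Computable k) {P : ℕ → ℕ → Prop}
    (hP : SigmaOneIn (fun q : ℕ × ℕ => P q.1 q.2) (jump A)) :
    SigmaOneIn (fun q : ℕ × Condition × Condition => Seek B k (P q.1) q.2.1 q.2.2)
      (jump (jump A)) := by
  have hlarge := SigmaOneIn.isLarge hBA hk
  have hfound : SigmaOneIn (fun q : ℕ × Condition × Condition =>
      ∃ e, P q.1 e ∧ IsLarge B k (avoid q.2.1 e) ∧ q.2.2 = avoid q.2.1 e) (jump A) :=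
    .projection (.and (hP.comp (f := fun r : (ℕ × Condition × Condition) × ℕ => (r.1.1, r.2))
      (by fun_prop)) (.and (hlarge.comp (by fun_prop)) (by fun_prop)))
  have hexists : SigmaOneIn (fun q : ℕ × Condition × Condition =>
      ∃ e, P q.1 e ∧ IsLarge B k (avoid q.2.1 e)) (jump A) :=
    .projection (.and (hP.comp (f := fun r : (ℕ × Condition × Condition) × ℕ => (r.1.1, r.2))
      (by fun_prop)) (hlarge.comp (by fun_prop)))
  exact hfound.to_jump.or (hexists.not_jump.and (by fun_prop))

theorem IsCoverless.sigmaOneIn_codes (h : IsCoverless A B k colour) :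
    SigmaOneIn (fun q : Bool × Condition × Condition => Codes B colour k q.1 q.2.1 q.2.2) A := by
  have hk := h.computable_exponent
  have hcolour := h.computable_colour
  have hBA := h.turingLE
  have hcodes : SigmaOneIn (fun q : Bool × Condition × Condition => ∃ n, q.2.1.2 ≤ n ∧
      B n = true ∧ colour n = q.1 ∧ q.2.2.2 = n + 1 ∧ q.2.1.1 ⊆ q.2.2.1 ∧
      blockComplIndex (n, k n) ∈ q.2.2.1 ∧
      ∀ n' < n, n' < q.2.1.2 ∨ B n' = false ∨ blockIndex (n', k n') ∈ q.2.2.1) A := by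
    fun_prop (disch := assumption)
  exact hcodes.of_iff fun q => by simp only [Codes, imp_iff_not_or, not_le, Bool.not_eq_true]

theorem sigmaOneIn_decidesBit : SigmaOneIn (fun q : ℕ × ℕ => DecidesBit q.1 q.2) X := by
  unfold DecidesBit
  fun_prop

theorem sigmaOneIn_isTestLevel : SigmaOneIn (fun q : ℕ × ℕ => IsTestLevel q.1 q.2) X := by
  unfold IsTestLevel
  fun_prop

theorem sigmaOneIn_separates : SigmaOneIn (fun q : ℕ × ℕ => Separates X q.1 q.2) X := by
  unfold Separates
  fun_prop

theorem IsCoverless.sigmaOneIn_stage (h : IsCoverless A B k colour)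
    (hX : TuringLE (jump (jump A)) X) : SigmaOneIn
      (fun q : ℕ × Condition × Condition => Stage A B colour k q.1 (X q.1) q.2.1 q.2.2) X := by
  have hJX : TuringLE (jump A) X := turingLE_trans turingLE_jump hX
  have hseek {P : ℕ → ℕ → Prop} (hP : SigmaOneIn (fun q : ℕ × ℕ => P q.1 q.2) (jump A)) :=
    (SigmaOneIn.seek h.turingLE h.computable_exponent hP).trans hX
  have hlarge := (SigmaOneIn.isLarge h.turingLE h.computable_exponent).trans hJX
  have hcodes := h.sigmaOneIn_codes.trans (turingLE_trans turingLE_jump hJX)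
  let Final (n : ℕ) (c c' : Condition) : Prop :=
    ∃ b, X n = b ∧ Codes B colour k b c c' ∧ IsLarge B k c'
  have hfinal : SigmaOneIn (fun q : ℕ × Condition × Condition => Final q.1 q.2.1 q.2.2) X :=
    .projection (.and (by fun_prop) (.and (hcodes.comp
      (f := fun r : (ℕ × Condition × Condition) × Bool => (r.2, r.1.2)) (by fun_prop))
      (hlarge.comp (by fun_prop))))
  let AfterTest (n : ℕ) := Relation.Comp (Seek B k (Separates (jump A) n)) (Final n)
  have hafterTest : SigmaOneIn
      (fun q : ℕ × Condition × Condition => AfterTest q.1 q.2.1 q.2.2) X :=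
    .relationComp (R := fun n => Seek B k (Separates (jump A) n)) (S := Final)
      (hseek sigmaOneIn_separates) hfinal
  let AfterBit (n : ℕ) := Relation.Comp (Seek B k (IsTestLevel n)) (AfterTest n)
  have hafterBit : SigmaOneIn
      (fun q : ℕ × Condition × Condition => AfterBit q.1 q.2.1 q.2.2) X :=
    .relationComp (R := fun n => Seek B k (IsTestLevel n)) (S := AfterTest)
      (hseek sigmaOneIn_isTestLevel) hafterTest
  refine (SigmaOneIn.relationComp (R := fun n => Seek B k (DecidesBit n)) (S := AfterBit)
    (hseek sigmaOneIn_decidesBit) hafterBit).of_iff fun q => ?_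
  simp only [Stage, AfterBit, AfterTest, Final, Relation.Comp, exists_and_left, exists_eq_left']

end Stages

/-! ### The construction -/

section Runs

variable {A B X R Z colour : ℕ → Bool} {k : ℕ → ℕ} {c : ℕ → Condition}

/-- A sequence `c` of conditions obtained by performing stage `n` with the bit `X n` to be coded,
together with a sequence `R` meeting all of them. -/
structure IsRun (A B X colour : ℕ → Bool) (k : ℕ → ℕ) (c : ℕ → Condition) (R : ℕ → Bool) :
    Prop where
  isLarge (n : ℕ) : IsLarge B k (c n)
  stage (n : ℕ) : Stage A B colour k n (X n) (c n) (c (n + 1))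
  sigmaOneIn_graph : SigmaOneIn (fun q : ℕ × Condition => c q.1 = q.2) X
  mem_avoiding (n : ℕ) : R ∈ avoiding (c n).1

theorem exists_forall_mem_avoiding {l : ℕ → List ℕ} (hl : ∀ n, l n ⊆ l (n + 1))
    (hne : ∀ n, (avoiding (l n)).Nonempty) : ∃ R, ∀ n, R ∈ avoiding (l n) := by
  obtain ⟨R, hR⟩ := IsCompact.nonempty_iInter_of_sequence_nonempty_isCompact_isClosed
    (fun n => avoiding (l n)) (fun n => avoiding_anti (hl n)) hne (isClosed_avoiding _).isCompact
    (fun n => isClosed_avoiding _)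
  exact ⟨R, Set.mem_iInter.1 hR⟩

theorem IsLarge.nonempty_avoiding {c : Condition} (hc : IsLarge B k c) : (avoiding c.1).Nonempty :=
  (nonempty_of_measureReal_ne_zero hc.ne').mono Set.sdiff_subset

theorem IsCoverless.exists_isRun (h : IsCoverless A B k colour)
    (hX : TuringLE (jump (jump A)) X) : ∃ c R, IsRun A B X colour k c R := by
  obtain ⟨j, hj⟩ := exists_isLarge_nil h.summable
  have hlarge := (SigmaOneIn.isLarge h.turingLE h.computable_exponent).not_jump.trans hX
  have hstage : SigmaOneIn (fun q : (ℕ × Condition) × Condition =>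
      ¬ IsLarge B k q.1.2 ∨ Stage A B colour k q.1.1 (X q.1.1) q.1.2 q.2) X :=
    .or (hlarge.comp (by fun_prop)) ((h.sigmaOneIn_stage hX).comp
      (f := fun q : (ℕ × Condition) × Condition => (q.1.1, q.1.2, q.2)) (by fun_prop))
  obtain ⟨f, hf, hgraph⟩ := hstage.exists_selector
    (p := fun (q : ℕ × Condition) c' =>
      ¬ IsLarge B k q.2 ∨ Stage A B colour k q.1 (X q.1) q.2 c') fun q => by
    by_cases hq : IsLarge B k q.2
    · exact (h.exists_stage hq q.1 (X q.1)).imp fun _ => .inr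
    · exact ⟨q.2, .inl hq⟩
  let c (n : ℕ) : Condition := Nat.rec ([], j) (fun n c => f (n, c)) n
  have hstep {n : ℕ} (hn : IsLarge B k (c n)) : Stage A B colour k n (X n) (c n) (c (n + 1)) :=
    (hf (n, c n)).resolve_left (not_not.2 hn)
  have hc (n : ℕ) : IsLarge B k (c n) := by
    induction n with
    | zero => exact hj
    | succ n ih => exact (hstep ih).isLarge
  obtain ⟨R, hR⟩ := exists_forall_mem_avoiding (l := fun n => (c n).1)
    (fun n => (hstep (hc n)).codes.fst_subset) fun n => (hc n).nonempty_avoiding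
  refine ⟨c, R, hc, fun n => hstep (hc n), ?_, hR⟩
  exact .graph_of_step (D := fun n c c' => f (n, c) = c')
    (hgraph.comp (f := fun q : ℕ × Condition × Condition => ((q.1, q.2.1), q.2.2)) (by fun_prop))
    fun n c' => Iff.rfl

namespace IsRun

variable (h : IsRun A B X colour k c R)
include h

theorem mlRandom : MLRandom R := by
  rintro G ⟨⟨e, hG⟩, hμ⟩
  obtain ⟨m, hm⟩ := (h.stage e).exists_testIndex_mem (h.isLarge e) fun m => hG m ▸ hμ m
  refine ⟨m, ?_⟩
  rw [hG, ← openSet_testIndex]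
  exact h.mem_avoiding _ _ hm

theorem computableSet_of_turingLE (hZA : TuringLE Z (jump A)) (hZR : TuringLE Z R) :
    ComputableSet Z := by
  obtain ⟨d, hd⟩ := hZR
  obtain ⟨d', hd'⟩ := hZA
  have hpair : (Nat.pair d d').unpair = (d, d') := Nat.unpair_pair d d'
  obtain ⟨e, he, hsep⟩ | ⟨c', hc', hsmall⟩ :=
    (h.stage (Nat.pair d d')).exists_separates_mem_or (h.isLarge _)
  · have hRe := h.mem_avoiding _ e he
    simp only [Separates, hpair] at hsep
    obtain ⟨i, rfl⟩ | ⟨τ, i, m, m', hne, hτ, hm', rfl⟩ := hsep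
    · exact (hRe (mem_openSet_domainIndex.2 ⟨_, (hd i _).2 rfl⟩)).elim
    · rw [openSet_cylinderComplIndex, Set.notMem_compl_iff] at hRe
      exact (hne (((hd i m).1 ⟨τ, hRe, hτ⟩).trans ((hd' i m').1 hm').symm)).elim
  · simp only [Separates, hpair] at hsmall
    exact hc'.computableSet (fun i => hsmall _ (.inl ⟨i, rfl⟩)) fun τ i m hm hτ =>
      hsmall _ (.inr ⟨τ, i, m, _, hm, hτ, (hd' i _).2 rfl, rfl⟩)

theorem bitIndex_mem_iff {n : ℕ} {b : Bool} : bitIndex (n, b) ∈ (c (n + 1)).1 ↔ R n = b := by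
  have hval {v : Bool} (hv : bitIndex (n, v) ∈ (c (n + 1)).1) : R n = v :=
    not_not.1 fun hne => h.mem_avoiding _ _ hv (mem_openSet_bitIndex.2 hne)
  obtain ⟨v, hv⟩ := (h.stage n).exists_bitIndex_mem (h.isLarge n)
  exact ⟨hval, fun hb => by rwa [← hb, hval hv]⟩

theorem turingLE : TuringLE R X := by
  have hbit (b : Bool) : SigmaOneIn (fun n => R n = b) X := by
    have hmem : SigmaOneIn (fun n => ∃ c', c (n + 1) = c' ∧ bitIndex (n, b) ∈ c'.1) X :=
      .projection (.and (h.sigmaOneIn_graph.comp (f := fun r : ℕ × Condition => (r.1 + 1, r.2))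
        (by fun_prop)) (by fun_prop))
    exact hmem.of_iff fun n => by simp only [exists_eq_left', h.bitIndex_mem_iff]
  exact turingLE_of_sigmaOneIn (hbit true) (hbit false)

end IsRun

/-- The number `n` is the first element of `B` from `a` on whose block contains `R`. -/
def IsNextHit (B R : ℕ → Bool) (k : ℕ → ℕ) (a n : ℕ) : Prop :=
  a ≤ n ∧ B n = true ∧ R ∈ block k n ∧ ∀ n' < n, a ≤ n' → B n' = true → R ∉ block k n'

theorem IsNextHit.eq {a n m : ℕ} (hn : IsNextHit B R k a n) (hm : IsNextHit B R k a m) :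
    n = m := by
  rcases lt_trichotomy n m with hlt | heq | hlt
  · exact (hm.2.2.2 n hlt hn.1 hn.2.1 hn.2.2.1).elim
  · exact heq
  · exact (hn.2.2.2 m hlt hm.1 hm.2.1 hm.2.2.1).elim

theorem sigmaOneIn_isNextHit {Y : ℕ → Bool} (hBY : TuringLE B Y) (hRY : TuringLE R Y)
    (hk : Computable k) : SigmaOneIn (fun q : ℕ × ℕ => IsNextHit B R k q.1 q.2) Y := by
  have hhit : SigmaOneIn (fun q : ℕ × ℕ => q.1 ≤ q.2 ∧ B q.2 = true ∧
      (∀ i < k q.2, R (Nat.pair q.2 i) = true) ∧ ∀ n' < q.2, n' < q.1 ∨ B n' = false ∨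
        ∃ i, i < k n' ∧ R (Nat.pair n' i) = false) Y := by
    fun_prop (disch := assumption)
  exact hhit.of_iff fun q => by
    simp only [IsNextHit, block, Set.mem_ofPred_eq]
    grind

theorem Codes.exists_isNextHit {b : Bool} {c c' : Condition} (h : Codes B colour k b c c')
    (hR : R ∈ avoiding c'.1) : ∃ n, IsNextHit B R k c.2 n ∧ c'.2 = n + 1 ∧ colour n = b := by
  obtain ⟨n, hn, hB, hcolour, hsnd, -, hmem, hskip⟩ := h
  refine ⟨n, ⟨hn, hB, ?_, fun n' hn' hcn' hBn' => ?_⟩, hsnd, hcolour⟩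
  · simpa only [openSet_blockComplIndex, Set.notMem_compl_iff] using hR _ hmem
  · simpa only [openSet_blockIndex] using hR _ (hskip n' hn' hcn' hBn')

theorem IsRun.turingLE_joinSet (h : IsRun A B X colour k c R) (hB : IsCoverless A B k colour) :
    TuringLE X (joinSet A R) := by
  have hBY : TuringLE B (joinSet A R) := turingLE_trans hB.turingLE turingLE_joinSet_left
  have hhit := sigmaOneIn_isNextHit hBY turingLE_joinSet_right hB.computable_exponent
  choose hit hit_spec hsnd hcolour using fun r =>
    (h.stage r).codes.exists_isNextHit (h.mem_avoiding (r + 1))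
  have hstart : SigmaOneIn (fun q : ℕ × ℕ => (c q.1).2 = q.2) (joinSet A R) := by
    refine .graph_of_step (D := fun _ a a' => ∃ n, IsNextHit B R k a n ∧ a' = n + 1)
      (.projection (.and (hhit.comp (f := fun r : (ℕ × ℕ × ℕ) × ℕ => (r.1.2.1, r.2))
        (by fun_prop)) (by fun_prop))) fun r a => ⟨?_, fun ha => ⟨hit r, hit_spec r, ?_⟩⟩
    · rintro ⟨n, hn, rfl⟩
      rw [hsnd, hn.eq (hit_spec r)]
    · rw [← ha, hsnd]
  have hcolour_computable := hB.computable_colour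
  have hbit (b : Bool) : SigmaOneIn (fun r => X r = b) (joinSet A R) := by
    have hsucc : SigmaOneIn (fun r => ∃ n, (c (r + 1)).2 = n + 1 ∧ colour n = b) (joinSet A R) :=
      .projection (.and (hstart.comp (f := fun q : ℕ × ℕ => (q.1 + 1, q.2 + 1)) (by fun_prop))
        (by fun_prop))
    exact hsucc.of_iff fun r => by
      simp only [hsnd, Nat.add_right_cancel_iff, exists_eq_left', hcolour]
  exact turingLE_of_sigmaOneIn (hbit true) (hbit false)

end Runs

end DayMiller

theorem stmt19_general (A : ℕ → Bool) (hA : ¬ KTrivial A)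
    (X : ℕ → Bool) (hX : TuringLE (jump (jump A)) X) :
    ∃ R : ℕ → Bool, MLRandom R ∧ ¬ TuringLE zeroJump R ∧
      TuringEquiv (joinSet A R) X ∧
      ∀ Z : ℕ → Bool, TuringLE Z (jump A) → TuringLE Z R → ComputableSet Z := by
  obtain ⟨B, k, colour, hB⟩ := DayMiller.exists_isCoverless hA
  obtain ⟨c, R, hrun⟩ := hB.exists_isRun hX
  have hpair (Z : ℕ → Bool) : TuringLE Z (jump A) → TuringLE Z R → ComputableSet Z :=
    hrun.computableSet_of_turingLE
  have hAX : TuringLE A X := DayMiller.turingLE_trans DayMiller.turingLE_jump <|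
    DayMiller.turingLE_trans DayMiller.turingLE_jump hX
  have hzero : TuringLE zeroJump (jump A) :=
    DayMiller.jump_turingLE_jump DayMiller.emptyOracle_turingLE
  exact ⟨R, hrun.mlRandom, fun h => DayMiller.not_jump_turingLE (hpair _ hzero h),
    ⟨DayMiller.joinSet_turingLE hAX hrun.turingLE, hrun.turingLE_joinSet hB⟩, hpair⟩

/-- final corollary of Day–Miller: cupping to any `X ≥_T A″`
with an incomplete random forming a minimal pair with `A`. -/
theorem stmt19 (A : ℕ → Bool) (hA : ¬ KTrivial A)
    (X : ℕ → Bool) (hX : TuringLE (jump (jump A)) X) :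
    ∃ R : ℕ → Bool, MLRandom R ∧ ¬ TuringLE zeroJump R ∧
      TuringEquiv (joinSet A R) X ∧
      ∀ Z : ℕ → Bool, TuringLE Z A → TuringLE Z R → ComputableSet Z := by
  obtain ⟨R, hrandom, hincomplete, hjoin, hpair⟩ := stmt19_general A hA X hX
  exact ⟨R, hrandom, hincomplete, hjoin,
    fun Z hZA => hpair Z (DayMiller.turingLE_trans hZA DayMiller.turingLE_jump)⟩
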